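/- arXiv:2006.07927 — 4 statements merged into one kernel-verified Lean document; each statement's English description precedes it below -/
import Mathlib

section
/- Let x ∈ (0,1). If q_s(x) does not belong to the closure 𝒰̄ of 𝒰(1) in ℝ, then the infimum defining q_s(x) is attained, i.e. q_s(x) ∈ 𝒰(x), so q_s(x) = min 𝒰(x). -/
/-!
Recode the digits `0, 1` as `-1, 1` and put `V q e = ∑ e_i q^{-(i+1)}`. A sequence expands `x` in
base `q` iff its value is `2x - 1/(q-1)`; for `x = 1` this number is `κ(q) = 2 - 1/(q-1)`. An
expansion is unique iff behind every digit `-1` the tail has value below `κ(q)`, and behind every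
digit `1` the negated tail has (`mem_univSet_iff`). Call such sequences strict, and weak if only
`≤` holds. Weakness survives limits of bases and sequences, and for `q < 2` a number has at most
one weak expansion (`weak_unique`).

The set `𝒰(x)` is nonempty and bounded below by `3/2` (`univSet_nonempty`, `base_lower`).
Suppose `q = q_s(x)` is not attained; `2 ∈ 𝒰(1)` gives `q < 2`. Choose bases in `𝒰(x)` decreasing
to `q` whose unique expansions converge to a sequence `d`. Then `d` is a weak expansion of `x`
in base `q`, it is not strict, and none of the approximating sequences equals `d`, since the number
expanded by a fixed sequence strictly decreases with the base (`V_anti`). Hence some normalised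
tail `c` of `d` has value `κ(q)`, i.e. `c` is a weak expansion of `1` in base `q`. It remains to
see that `q` lies in the closure of `𝒰(1)`.

If `c` is strict, then `q ∈ 𝒰(1)`. Otherwise a normalised tail of `c`, behind some position `j`,
again has value `κ(q)`, and hence equals `c` by uniqueness.

* The case `c_j = 1`, in which `c` continues with its own reflection, is impossible (`odd_case`).
  The approximating sequences share ever longer prefixes with `c` without being equal to it, so
  each has a tail which starts like `c` but whose own tail behind `j` does not. The digit `1` turns
  the upper bound for the former into a lower bound for the latter, so in the limit the latter has
  value `κ(q)`, and it must be `c` after all.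
* If only digits `c_j = -1` occur here, `c` is periodic and `q` is approximated from below by
  elements of `𝒰(1)` (`even_case`). Their expansions of `1` consist of many periods of `c`
  followed by `S`, a prefix of `c` continued by alternate reflections. The prefix is cut where the
  gap in the condition behind digits `1` attains a record minimum (`exists_record`); this makes
  `S` strict in all bases near `q` (`exists_reflected`), and the glued sequences strict as well
  (`glue_strict`).
-/

open Filter Set

noncomputable section

/-- `d` is a `q`-expansion of `x`: all digits lie in `{0,1}` and
`x = ∑_{i=1}^∞ d_i q^{-i}`.  Here `d i` stands for the digit `d_{i+1}`. -/
def IsExpansion (q x : ℝ) (d : ℕ → ℕ) : Prop :=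
  (∀ i, d i ≤ 1) ∧ x = ∑' i : ℕ, (d i : ℝ) / q ^ (i + 1)

/-- `𝒰(x)`: the set of bases `q ∈ (1,2]` in which `x` has a unique expansion. -/
def UnivSet (x : ℝ) : Set ℝ :=
  {q | q ∈ Set.Ioc (1 : ℝ) 2 ∧ ∃! d : ℕ → ℕ, IsExpansion q x d}

/-- `q_s(x) = inf 𝒰(x)`. -/
def qs (x : ℝ) : ℝ := sInf (UnivSet x)

/-- The level set `L(q) = {x > 0 : q_s(x) = q}`. -/
def levelSet (q : ℝ) : Set ℝ := {x | 0 < x ∧ qs x = q}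

/-- The golden ratio `q_G = (1+√5)/2`. -/
def qG : ℝ := (1 + Real.sqrt 5) / 2

/-- The Thue–Morse sequence: `tm i = s_i mod 2`, where `s_i` is the number of
`1`s in the binary representation of `i`. -/
def tm (i : ℕ) : ℕ := (Nat.digits 2 i).sum % 2

/-- The set `S ⊆ ℕ`: `2, 3, 4 ∈ S`, and for `k ≥ 2` and `2^k < n ≤ 2^{k+1}`,
`n ∈ S` iff `n > 3·2^{k-1}` and `n - 3·2^{k-1} ∈ S`; no other elements. -/
inductive memS : ℕ → Prop
  | two : memS 2
  | three : memS 3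
  | four : memS 4
  | step (k n : ℕ) (hk : 2 ≤ k) (h1 : 2 ^ k < n) (h2 : n ≤ 2 ^ (k + 1))
      (h3 : 3 * 2 ^ (k - 1) < n) (h : memS (n - 3 * 2 ^ (k - 1))) : memS n

namespace Univoque

/-! ### Sign sequences and their values -/

/-- The value `∑ e_i q^{-(i+1)}` of a digit sequence in base `q`. -/
def V (q : ℝ) (e : ℕ → ℝ) : ℝ := ∑' i : ℕ, e i / q ^ (i + 1)

/-- The sequence `e` with its first `k` terms removed. -/
def sh (k : ℕ) (e : ℕ → ℝ) : ℕ → ℝ := fun i => e (k + i)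

/-- The normalised tail of `e` behind position `j`: the tail itself if `e j = -1`, and its
negation if `e j = 1`. -/
def tl (j : ℕ) (e : ℕ → ℝ) : ℕ → ℝ := fun i => -e j * e (j + 1 + i)

/-- Sequences over the alphabet `{1, -1}`. -/
def IsSign (e : ℕ → ℝ) : Prop := ∀ i, e i = 1 ∨ e i = -1

/-- The number `2 - 1/(q-1)`: the value in base `q` of the recoded expansions of `1`. -/
def kap (q : ℝ) : ℝ := 2 - 1 / (q - 1)

/-- Strict admissibility in base `q`: every normalised tail has value below `kap q`. Among the
expansions of a number these are exactly the unique ones. -/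
def Strict (q : ℝ) (e : ℕ → ℝ) : Prop := ∀ j, V q (tl j e) < kap q

/-- Weak admissibility in base `q`: the closed version of `Strict`. -/
def Weak (q : ℝ) (e : ℕ → ℝ) : Prop := ∀ j, V q (tl j e) ≤ kap q

lemma IsSign.abs {e : ℕ → ℝ} (he : IsSign e) (i : ℕ) : |e i| = 1 := by
  rcases he i with h | h <;> simp [h]

lemma IsSign.mul_self {e : ℕ → ℝ} (he : IsSign e) (i : ℕ) : e i * e i = 1 := by
  rcases he i with h | h <;> simp [h]

lemma IsSign.eq_neg {a b : ℕ → ℝ} (ha : IsSign a) (hb : IsSign b) {i : ℕ}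
    (h : a i ≠ b i) : b i = -a i := by
  rcases ha i with h1 | h1 <;> rcases hb i with h2 | h2 <;> simp_all

lemma IsSign.sh {e : ℕ → ℝ} (he : IsSign e) (k : ℕ) : IsSign (sh k e) := fun i => he (k + i)

lemma IsSign.tl {e : ℕ → ℝ} (he : IsSign e) (k : ℕ) : IsSign (tl k e) := fun i => by
  unfold Univoque.tl
  rcases he k with h1 | h1 <;> rcases he (k + 1 + i) with h2 | h2 <;> simp [h1, h2]

lemma tl_tl {e : ℕ → ℝ} (he : IsSign e) (i j : ℕ) : tl i (tl j e) = tl (j + 1 + i) e := by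
  funext k
  have h := he.mul_self j
  simp only [tl]
  rw [show j + 1 + (i + 1 + k) = j + 1 + i + 1 + k by ring]
  linear_combination (-e (j + 1 + i) * e (j + 1 + i + 1 + k)) * h

lemma Strict.tl {q : ℝ} {e : ℕ → ℝ} (he : IsSign e) (h : Strict q e) (j : ℕ) :
    Strict q (tl j e) := fun i => by rw [tl_tl he]; exact h _

lemma Weak.tl {q : ℝ} {e : ℕ → ℝ} (he : IsSign e) (h : Weak q e) (j : ℕ) :
    Weak q (tl j e) := fun i => by rw [tl_tl he]; exact h _

lemma hasSum_geom {q : ℝ} (hq : 1 < q) : HasSum (fun i : ℕ => 1 / q ^ (i + 1)) (1 / (q - 1)) := by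
  have h := (hasSum_geometric_of_lt_one (r := q⁻¹) (by positivity)
    (inv_lt_one_of_one_lt₀ hq)).mul_left q⁻¹
  have h1 : q - 1 ≠ 0 := by linarith
  have h2 : q ≠ 0 := by linarith
  have h3 : (fun i : ℕ => 1 / q ^ (i + 1)) = fun i : ℕ => q⁻¹ * q⁻¹ ^ i := by
    funext i
    rw [← pow_succ', inv_pow, one_div]
  rw [h3, show 1 / (q - 1) = q⁻¹ * (1 - q⁻¹)⁻¹ by field_simp]
  exact h

lemma summ {q : ℝ} (hq : 1 < q) {e : ℕ → ℝ} (he : IsSign e) :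
    Summable (fun i : ℕ => e i / q ^ (i + 1)) := by
  refine Summable.of_norm_bounded (hasSum_geom hq).summable fun i => ?_
  rw [norm_div, Real.norm_eq_abs, he.abs, Real.norm_of_nonneg (by positivity)]

lemma V_bound {q : ℝ} (hq : 1 < q) {e : ℕ → ℝ} (he : IsSign e) : |V q e| ≤ 1 / (q - 1) := by
  refine tsum_of_norm_bounded (f := fun i : ℕ => e i / q ^ (i + 1)) (hasSum_geom hq) fun i => ?_
  rw [norm_div, Real.norm_eq_abs, he.abs, Real.norm_of_nonneg (by positivity)]

lemma V_mul (q a : ℝ) (e : ℕ → ℝ) : V q (fun i => a * e i) = a * V q e := by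
  unfold V
  rw [← tsum_mul_left]
  congr 1; funext i; ring

lemma V_tl (q : ℝ) (j : ℕ) (e : ℕ → ℝ) : V q (tl j e) = -e j * V q (sh (j + 1) e) :=
  V_mul q (-e j) (sh (j + 1) e)

lemma V_step {q : ℝ} (hq : 1 < q) {e : ℕ → ℝ} (he : IsSign e) :
    V q e = (e 0 + V q (sh 1 e)) / q := by
  unfold V
  rw [(summ hq he).tsum_eq_zero_add, add_div, ← tsum_div_const]
  congr 1
  · simp
  · congr 1; funext i; simp only [sh]; rw [add_comm 1 i, pow_succ q (i + 1), div_div]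

lemma sh_sh (a b : ℕ) (e : ℕ → ℝ) : sh a (sh b e) = sh (b + a) e := by
  funext i; simp only [sh]; congr 1; ring

lemma sh_zero (e : ℕ → ℝ) : sh 0 e = e := by funext i; simp [sh]

/-- Sequences with a common prefix of length `m` differ in value by `q^{-m}` times the
difference of the values of their tails. -/
lemma V_agree {q : ℝ} (hq : 1 < q) (m : ℕ) {a b : ℕ → ℝ} (ha : IsSign a) (hb : IsSign b)
    (h : ∀ i < m, a i = b i) :
    V q a - V q b = (V q (sh m a) - V q (sh m b)) / q ^ m := by
  induction m with
  | zero => simp [sh_zero]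
  | succ m ih =>
    rw [ih fun i hi => h i (by omega), V_step hq (ha.sh m), V_step hq (hb.sh m), sh_sh, sh_sh]
    have : sh m a 0 = sh m b 0 := h m (by omega)
    rw [this, pow_succ]
    have : q ≠ 0 := by linarith
    field_simp
    ring

lemma exists_first_diff {a b : ℕ → ℝ} (h : a ≠ b) : ∃ i, a i ≠ b i ∧ ∀ k < i, a k = b k := by
  classical
  have hex : ∃ i, a i ≠ b i := Function.ne_iff.mp h
  exact ⟨Nat.find hex, Nat.find_spec hex, fun k hk => not_not.mp (Nat.find_min hex hk)⟩

/-- At the first position where two expansions of the same number differ,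
the digit difference is compensated by the tails. -/
lemma V_first_diff {q : ℝ} (hq : 1 < q) {a b : ℕ → ℝ} (ha : IsSign a) (hb : IsSign b) {i : ℕ}
    (hne : a i ≠ b i) (hag : ∀ k < i, a k = b k) (hV : V q a = V q b) :
    a i + V q (sh (i + 1) a) = -a i + V q (sh (i + 1) b) := by
  have h := V_agree hq i ha hb hag
  rw [hV, sub_self, V_step hq (ha.sh i), V_step hq (hb.sh i), sh_sh, sh_sh] at h
  have h0 : q ≠ 0 := by linarith
  have h1 : sh i b 0 = -a i := ha.eq_neg hb hne
  have h2 : sh i a 0 = a i := rfl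
  rw [h1, h2] at h
  field_simp at h
  linarith

/-! ### Continuity and compactness -/

/-- Tannery: the value depends continuously on base and digits jointly. -/
lemma V_tendsto {ι : Type*} {l : Filter ι} {Q : ι → ℝ} {E : ι → ℕ → ℝ} {q : ℝ} {e : ℕ → ℝ}
    (hq : 1 < q) (hQ : Tendsto Q l (nhds q)) (hE : Tendsto E l (nhds e))
    (hs : ∀ n, IsSign (E n)) : Tendsto (fun n => V (Q n) (E n)) l (nhds (V q e)) := by
  obtain ⟨r, hr1, hr2⟩ := exists_between hq
  refine tendsto_tsum_of_dominated_convergence (bound := fun i : ℕ => 1 / r ^ (i + 1))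
    (hasSum_geom hr1).summable (fun k => ?_) ?_
  · exact ((tendsto_pi_nhds.mp hE) k).div (hQ.pow _) (by positivity)
  · filter_upwards [hQ.eventually (lt_mem_nhds hr2)] with n hn k
    have : 0 < Q n := by linarith
    rw [norm_div, Real.norm_eq_abs, (hs n).abs, Real.norm_of_nonneg (by positivity)]
    gcongr

lemma V_tendsto_base {q : ℝ} {e : ℕ → ℝ} (hq : 1 < q) (hs : IsSign e) :
    Tendsto (fun p => V p e) (nhds q) (nhds (V q e)) :=
  V_tendsto hq tendsto_id tendsto_const_nhds fun _ => hs

lemma kap_tendsto {q : ℝ} (hq : 1 < q) : Tendsto kap (nhds q) (nhds (kap q)) := by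
  unfold kap
  exact tendsto_const_nhds.sub (tendsto_const_nhds.div (tendsto_id.sub tendsto_const_nhds)
    (by linarith))

lemma tl_tendsto {ι : Type*} {l : Filter ι} {E : ι → ℕ → ℝ} {e : ℕ → ℝ}
    (hE : Tendsto E l (nhds e)) (j : ℕ) : Tendsto (fun n => tl j (E n)) l (nhds (tl j e)) := by
  have h := tendsto_pi_nhds.mp hE
  exact tendsto_pi_nhds.mpr fun i => (h j).neg.mul (h (j + 1 + i))

lemma sign_of_tendsto {E : ℕ → ℕ → ℝ} {e : ℕ → ℝ}
    (hE : Tendsto E atTop (nhds e)) (hs : ∀ n, IsSign (E n)) : IsSign e := by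
  intro i
  have h := tendsto_pi_nhds.mp hE i
  have hc : IsClosed ({1, -1} : Set ℝ) := (Set.toFinite _).isClosed
  exact hc.mem_of_tendsto h (Eventually.of_forall fun n => hs n i)

lemma weak_of_tendsto {Q : ℕ → ℝ} {E : ℕ → ℕ → ℝ} {q : ℝ} {e : ℕ → ℝ}
    (hq : 1 < q) (hQ : Tendsto Q atTop (nhds q)) (hE : Tendsto E atTop (nhds e))
    (hs : ∀ n, IsSign (E n)) (hS : ∀ n, Strict (Q n) (E n)) : Weak q e := fun j =>
  le_of_tendsto_of_tendsto' (V_tendsto hq hQ (tl_tendsto hE j) fun n => (hs n).tl j)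
    ((kap_tendsto hq).comp hQ) fun n => (hS n j).le

lemma exists_subseq (E : ℕ → ℕ → ℝ) (hs : ∀ n, IsSign (E n)) :
    ∃ e, IsSign e ∧ ∃ φ : ℕ → ℕ, StrictMono φ ∧ Tendsto (E ∘ φ) atTop (nhds e) := by
  have hc : IsCompact (Set.univ.pi fun _ : ℕ => ({1, -1} : Set ℝ)) :=
    isCompact_univ_pi fun _ => (Set.toFinite _).isCompact
  obtain ⟨e, -, φ, hφ, h⟩ := hc.tendsto_subseq (x := E) fun n i _ => hs n i
  exact ⟨e, sign_of_tendsto h fun n => hs (φ n), φ, hφ, h⟩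

lemma eventually_agree {E : ℕ → ℕ → ℝ} {e : ℕ → ℝ}
    (hE : Tendsto E atTop (nhds e)) (hs : ∀ n, IsSign (E n)) (he : IsSign e) (N : ℕ) :
    ∀ᶠ n in atTop, ∀ i < N, E n i = e i := by
  refine (Set.finite_Iio N).eventually_all.mpr fun i _ => ?_
  have h := tendsto_pi_nhds.mp hE i
  filter_upwards [Metric.tendsto_nhds.mp h 1 one_pos] with n hn
  by_contra hne
  rw [(he.eq_neg (hs n) (Ne.symm hne)), Real.dist_eq] at hn
  rcases he i with h1 | h1 <;> rw [h1] at hn <;> norm_num at hn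

/-! ### Rigidity in a fixed base and monotonicity in the base -/

/-- In a base below `2`, two weakly admissible expansions of one number coincide. -/
lemma weak_unique {q : ℝ} (hq : 1 < q) (hq2 : q < 2) {a b : ℕ → ℝ} (ha : IsSign a)
    (hb : IsSign b) (hwa : Weak q a) (hwb : Weak q b) (hV : V q a = V q b) : a = b := by
  by_contra hne
  obtain ⟨i, h1, h2⟩ := exists_first_diff hne
  have h := V_first_diff hq ha hb h1 h2 hV
  have wa := hwa i
  have wb := hwb i
  rw [V_tl] at wa wb
  rw [ha.eq_neg hb h1] at wb
  have hk : kap q < 1 := by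
    unfold kap
    have : 1 < 1 / (q - 1) := by rw [lt_div_iff₀] <;> linarith
    linarith
  rcases ha i with h3 | h3 <;> rw [h3] at h wa wb <;> linarith

/-- The number expanded by a fixed sequence, half of `V q e + 1 / (q - 1)`, is strictly
decreasing in the base, unless all digits are `-1`. -/
lemma V_anti {p q : ℝ} (hp : 1 < p) (hpq : p < q) {e : ℕ → ℝ} (he : IsSign e)
    {k : ℕ} (hk : e k = 1) : V q e + 1 / (q - 1) < V p e + 1 / (p - 1) := by
  have hq : 1 < q := by linarith
  have h1 := (summ hp he).hasSum.add (hasSum_geom hp)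
  have h2 := (summ hq he).hasSum.add (hasSum_geom hq)
  have hpos : ∀ i, 0 ≤ e i + 1 := fun i => by rcases he i with h | h <;> rw [h] <;> norm_num
  refine hasSum_lt (i := k) (fun i => ?_) ?_ h2 h1
  · simp only [← add_div]
    have := hpos i
    gcongr
  · simp only [← add_div, hk]
    gcongr

/-! ### Unique expansions and strict admissibility -/

/-- Every number of modulus at most `1/(q-1)` has an expansion over `{1, -1}`: the greedy one. -/
lemma exists_expansion {q v : ℝ} (hq : 1 < q) (hq2 : q ≤ 2) (hv : |v| ≤ 1 / (q - 1)) :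
    ∃ e, IsSign e ∧ V q e = v := by
  classical
  let s : ℝ → ℝ := fun y => if 0 ≤ y then 1 else -1
  have hs : ∀ y, s y = 1 ∨ s y = -1 := fun y => by simp only [s]; split_ifs <;> simp
  let g : ℕ → ℝ := fun n => Nat.rec v (fun _ y => q * y - s y) n
  have g1 : ∀ n, g (n + 1) = q * g n - s (g n) := fun n => rfl
  have h1 : (1 : ℝ) ≤ 1 / (q - 1) := by rw [le_div_iff₀] <;> linarith
  have h2 : q * (1 / (q - 1)) = 1 / (q - 1) + 1 := by
    have : q - 1 ≠ 0 := by linarith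
    field_simp; ring
  have gb : ∀ n, |g n| ≤ 1 / (q - 1) := by
    intro n
    induction n with
    | zero => exact hv
    | succ n ih =>
      rw [abs_le] at ih ⊢
      rw [g1]
      rcases le_or_gt 0 (g n) with h | h
      · have : s (g n) = 1 := if_pos h
        rw [this]
        constructor <;> nlinarith
      · have : s (g n) = -1 := by simp only [s]; rw [if_neg h.not_ge]
        rw [this]
        constructor <;> nlinarith
  have hsg : IsSign fun n => s (g n) := fun n => hs _
  refine ⟨fun n => s (g n), hsg, ?_⟩
  have hq0 : q ≠ 0 := by linarith
  have hp : ∀ n, ∑ i ∈ Finset.range n, s (g i) / q ^ (i + 1) = v - g n / q ^ n := by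
    intro n
    induction n with
    | zero => simp [g]
    | succ n ih =>
      rw [Finset.sum_range_succ, ih, g1, pow_succ]
      field_simp
      ring
  refine HasSum.tsum_eq ?_
  rw [(summ hq hsg).hasSum_iff_tendsto_nat]
  simp only [hp]
  have : Tendsto (fun n => g n / q ^ n) atTop (nhds 0) := by
    refine squeeze_zero_norm (a := fun n => 1 / (q - 1) * (q⁻¹) ^ n) (fun n => ?_) ?_
    · rw [norm_div, Real.norm_eq_abs, Real.norm_of_nonneg (by positivity), div_eq_mul_inv,
        inv_pow]
      exact mul_le_mul_of_nonneg_right (gb n) (by positivity)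
    · simpa using (tendsto_pow_atTop_nhds_zero_of_lt_one (r := q⁻¹) (by positivity)
        (inv_lt_one_of_one_lt₀ hq)).const_mul (1 / (q - 1))
  simpa using this.const_sub v

/-- The digit `d ∈ {0,1}` is encoded by the sign `2d - 1`. -/
def ts (d : ℕ → ℕ) : ℕ → ℝ := fun i => 2 * (d i : ℝ) - 1

lemma ts_sign {d : ℕ → ℕ} (hd : ∀ i, d i ≤ 1) : IsSign (ts d) := by
  intro i
  have h := hd i
  unfold ts
  interval_cases d i <;> norm_num

lemma exists_ts {e : ℕ → ℝ} (he : IsSign e) : ∃ d : ℕ → ℕ, (∀ i, d i ≤ 1) ∧ ts d = e := by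
  classical
  refine ⟨fun i => if e i = 1 then 1 else 0, fun i => ?_, ?_⟩
  · dsimp only; split_ifs <;> simp
  · funext i
    rcases he i with h | h <;> simp [ts, h] <;> norm_num

lemma ts_inj {d d' : ℕ → ℕ} (h : ts d = ts d') : d = d' := by
  funext i
  have := congrFun h i
  simp only [ts] at this
  have h2 : (d i : ℝ) = d' i := by linarith
  exact_mod_cast h2

lemma isExpansion_iff {q x : ℝ} (hq : 1 < q) (d : ℕ → ℕ) :
    IsExpansion q x d ↔ (∀ i, d i ≤ 1) ∧ V q (ts d) = 2 * x - 1 / (q - 1) := by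
  unfold IsExpansion
  refine and_congr_right fun hd => ?_
  have h1 := (summ hq (ts_sign hd)).hasSum.add (hasSum_geom hq)
  have h2 : (fun i : ℕ => ts d i / q ^ (i + 1) + 1 / q ^ (i + 1)) =
      fun i : ℕ => 2 * ((d i : ℝ) / q ^ (i + 1)) := by
    funext i; simp only [ts]; ring
  rw [h2] at h1
  have h3 := h1.tsum_eq
  rw [tsum_mul_left] at h3
  change _ = V q (ts d) + _ at h3
  constructor <;> intro h <;> linarith

/-- Uniqueness of an expansion amounts to strict admissibility: another expansion starting with
the opposite digit at `j` exists iff what remains for its tail is at most `1/(q-1)` in modulus. -/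
lemma mem_univSet_iff {q x : ℝ} (hq : 1 < q) (hq2 : q ≤ 2) :
    q ∈ UnivSet x ↔ ∃ e, IsSign e ∧ V q e = 2 * x - 1 / (q - 1) ∧ Strict q e := by
  constructor
  · rintro ⟨-, d, hd, hun⟩
    have hd' := (isExpansion_iff hq d).mp hd
    have hs := ts_sign hd'.1
    refine ⟨ts d, hs, hd'.2, fun j => ?_⟩
    by_contra! hlt
    set e := ts d with he
    have hb := V_bound hq (hs.tl j)
    rw [V_tl] at hlt hb
    unfold kap at hlt
    have h1 : (1 : ℝ) ≤ 1 / (q - 1) := by rw [le_div_iff₀] <;> linarith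
    -- Flipping the digit at `j` leaves a remainder that some tail can represent.
    obtain ⟨t, ht, htV⟩ := exists_expansion (v := V q (sh (j + 1) e) + 2 * e j) hq hq2 (by
      rw [abs_le] at hb ⊢
      rcases hs j with h | h <;> rw [h] at hlt hb ⊢ <;> constructor <;> linarith)
    let f : ℕ → ℝ := fun i => if i < j then e i else if i = j then -e j else t (i - (j + 1))
    have hf : IsSign f := by
      intro i
      simp only [f]
      split_ifs
      · exact hs i
      · rcases hs j with h | h <;> rw [h] <;> simp
      · exact ht _
    have hft : sh (j + 1) f = t := by
      funext i
      simp only [sh, f]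
      rw [if_neg (by omega), if_neg (by omega)]
      congr 1; omega
    have hag := V_agree hq j hf hs fun i hi => if_pos hi
    rw [V_step hq (hf.sh j), V_step hq (hs.sh j), sh_sh, sh_sh, hft, htV] at hag
    have hfj : sh j f 0 = -e j := by simp [sh, f]
    have hej : sh j e 0 = e j := rfl
    rw [hfj, hej, show -e j + (V q (sh (j + 1) e) + 2 * e j) = e j + V q (sh (j + 1) e) by ring,
      sub_self, zero_div] at hag
    obtain ⟨d', hd1, hd2⟩ := exists_ts hf
    have hdd := hun d' ((isExpansion_iff hq d').mpr ⟨hd1, by rw [hd2]; linarith [hd'.2]⟩)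
    have hfe : f = e := by rw [← hd2, hdd]
    have := congrFun hfe j
    simp only [f, lt_irrefl, if_true, if_false] at this
    rcases hs j with h | h <;> rw [h] at this <;> norm_num at this
  · rintro ⟨e, he, hV, hst⟩
    obtain ⟨d, hd1, rfl⟩ := exists_ts he
    refine ⟨⟨hq, hq2⟩, d, (isExpansion_iff hq d).mpr ⟨hd1, hV⟩, fun d' hd' => ?_⟩
    obtain ⟨hd1', hV'⟩ := (isExpansion_iff hq d').mp hd'
    refine ts_inj ?_
    by_contra hne
    have hs' := ts_sign hd1'
    obtain ⟨i, h1, h2⟩ := exists_first_diff (Ne.symm hne)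
    have h := V_first_diff hq he hs' h1 h2 (hV.trans hV'.symm)
    have hs := hst i
    have hb := V_bound hq (hs'.sh (i + 1))
    rw [V_tl] at hs
    rw [abs_le] at hb
    unfold kap at hs
    rcases he i with h3 | h3 <;> rw [h3] at h hs <;> linarith

lemma V_const {q a : ℝ} (hq : 1 < q) {e : ℕ → ℝ} (he : ∀ i, e i = a) :
    V q e = a * (1 / (q - 1)) := by
  unfold V
  rw [← (hasSum_geom hq).tsum_eq, ← tsum_mul_left]
  congr 1; funext i; rw [he]; ring

lemma two_mem : (2 : ℝ) ∈ UnivSet 1 := by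
  refine (mem_univSet_iff one_lt_two le_rfl).mpr ⟨fun _ => 1, fun _ => Or.inl rfl, ?_, fun j => ?_⟩
  · rw [V_const (a := 1) one_lt_two fun _ => rfl]; norm_num
  · rw [V_const (a := -1) one_lt_two fun _ => by simp [tl]]; norm_num [kap]

/-- A sequence that expands `x ∈ (0,1)` is not constant: the constant sequences expand `0` and
`1/(q-1) ≥ 1`. -/
lemma not_const {q x : ℝ} (hq : 1 < q) (hq2 : q ≤ 2) (hx : x ∈ Set.Ioo (0 : ℝ) 1) {e : ℕ → ℝ}
    (hV : V q e = 2 * x - 1 / (q - 1)) {a : ℝ} (ha : a = 1 ∨ a = -1) : ∃ i, e i ≠ a := by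
  by_contra! h
  rw [V_const hq h] at hV
  have h1 : (1 : ℝ) ≤ 1 / (q - 1) := by rw [le_div_iff₀] <;> linarith
  rcases ha with rfl | rfl <;> linarith [hx.1, hx.2]

/-- For `q ≤ 3/2` one has `kap q ≤ 0`, which forbids the digit changes that a nonconstant
expansion must have. -/
lemma base_lower {q x : ℝ} (hx : x ∈ Set.Ioo (0 : ℝ) 1) (h : q ∈ UnivSet x) : 3 / 2 < q := by
  obtain ⟨hq, hq2⟩ := h.1
  obtain ⟨e, he, hV, hst⟩ := (mem_univSet_iff hq hq2).mp h
  by_contra! hle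
  have hk : kap q ≤ 0 := by
    unfold kap
    have : 2 ≤ 1 / (q - 1) := by rw [le_div_iff₀] <;> linarith
    linarith
  have hj : ∃ j, e (j + 1) ≠ e j := by
    by_contra! hc
    obtain ⟨i, hi⟩ := not_const hq hq2 hx hV (he 0)
    exact hi (Nat.rec rfl (fun n ih => (hc n).trans ih) i)
  obtain ⟨j, hj⟩ := hj
  have h1 := hst j
  have h2 := hst (j + 1)
  have h4 : e (j + 1) = -e j := by
    rcases he j with h5 | h5 <;> rcases he (j + 1) with h6 | h6 <;> simp_all
  rw [V_tl] at h1 h2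
  rw [V_step hq (he.sh _), sh_sh] at h1
  have h7 : sh (j + 1) e 0 = -e j := h4
  rw [h7, mul_div_assoc', div_lt_iff₀ (by linarith)] at h1
  have h8 : kap q * q ≤ 0 := mul_nonpos_of_nonpos_of_nonneg hk (by linarith)
  have h9 := he.mul_self j
  rw [h4] at h2
  nlinarith

/-! ### Nonemptiness of `𝒰(x)` -/

/-- Intermediate values: a fixed sequence expands `x` in some base between two bases at which
its value is too large, respectively too small. -/
lemma exists_base {p r x : ℝ} {e : ℕ → ℝ} (hp : 1 < p) (hpr : p ≤ r) (he : IsSign e)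
    (h1 : 2 * x < V p e + 1 / (p - 1)) (h2 : V r e + 1 / (r - 1) ≤ 2 * x) :
    ∃ q, p < q ∧ q ≤ r ∧ V q e = 2 * x - 1 / (q - 1) := by
  have hc : ContinuousOn (fun q => V q e + 1 / (q - 1)) (Set.Icc p r) := by
    intro q hq
    have hq1 : 1 < q := by linarith [hq.1]
    have h0 : q - 1 ≠ 0 := by linarith
    refine ContinuousAt.continuousWithinAt ?_
    exact (show ContinuousAt (fun q => V q e) q from V_tendsto_base hq1 he).add
      (continuousAt_const.div (continuousAt_id.sub continuousAt_const) h0)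
  obtain ⟨q, hq, hqV⟩ := intermediate_value_Icc' hpr hc ⟨h2, h1.le⟩
  dsimp only at hqV
  refine ⟨q, lt_of_le_of_ne hq.1 ?_, hq.2, by linarith⟩
  rintro rfl
  linarith

/-- The alternating sequence `1, -1, 1, …` -/
def alt : ℕ → ℝ := fun i => (-1) ^ i

lemma alt_sign : IsSign alt := fun i => neg_one_pow_eq_or ℝ i

lemma tl_alt (j : ℕ) : tl j alt = alt := by
  funext i
  simp only [tl, alt]
  have h := alt_sign.mul_self j
  simp only [alt] at h
  rw [pow_add, pow_succ]
  linear_combination (-1) ^ i * h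

lemma V_alt {q : ℝ} (hq : 1 < q) : V q alt = 1 / (q + 1) := by
  have h := V_step hq alt_sign
  have h1 := V_tl q 0 alt
  rw [tl_alt] at h1
  have h0 : alt 0 = 1 := by simp [alt]
  rw [h0] at h h1
  have h2 : V q (sh 1 alt) = - V q alt := by linarith
  rw [h2, eq_div_iff (by linarith)] at h
  rw [eq_div_iff (by linarith)]
  linarith

/-- `-1` repeated `n` times, followed by the alternating sequence. -/
def lead (n : ℕ) : ℕ → ℝ := fun i => if i < n then -1 else alt (i - n)

lemma lead_sign (n : ℕ) : IsSign (lead n) := fun i => by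
  unfold lead
  split_ifs
  · exact Or.inr rfl
  · exact alt_sign _

lemma sh_lead {n j : ℕ} (hj : j ≤ n) : sh j (lead n) = lead (n - j) := by
  funext i
  simp only [sh, lead]
  by_cases h : i < n - j
  · rw [if_pos h, if_pos (by omega)]
  · rw [if_neg h, if_neg (by omega)]; congr 1; omega

lemma lead_zero : lead 0 = alt := by funext i; simp [lead]

lemma V_lead {q : ℝ} (hq : 1 < q) (n : ℕ) :
    V q (lead n) + 1 / (q - 1) = 2 * (q / (q ^ 2 - 1) / q ^ n) := by
  have h := V_agree hq n (b := fun _ => -1) (lead_sign n) (fun _ => Or.inr rfl)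
    fun i hi => by simp [lead, hi]
  rw [sh_lead le_rfl, Nat.sub_self, lead_zero, V_alt hq,
    V_const (e := fun _ => -1) (a := -1) hq fun _ => rfl,
    V_const (e := sh n fun _ => -1) (a := -1) hq fun _ => rfl] at h
  have h1 : q - 1 ≠ 0 := by linarith
  have h2 : q + 1 ≠ 0 := by linarith
  have h3 : q ^ 2 - 1 ≠ 0 := by
    rw [show q ^ 2 - 1 = (q - 1) * (q + 1) by ring]; exact mul_ne_zero h1 h2
  have h4 : q ≠ 0 := by linarith
  have h5 : V q (lead n) + 1 / (q - 1) = (1 / (q + 1) - -1 * (1 / (q - 1))) / q ^ n := by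
    rw [← h]; ring
  rw [h5]
  field_simp
  ring

lemma alt_lt_kap {q : ℝ} (hq : 1 < q) (hg : q + 1 < q ^ 2) : 1 / (q + 1) < kap q := by
  unfold kap
  have h1 : 0 < q - 1 := by linarith
  rw [lt_sub_iff_add_lt, div_add_div _ _ (by linarith) (by linarith), div_lt_iff₀ (by nlinarith)]
  nlinarith

lemma lead_strict {q : ℝ} (hq : 1 < q) (hg : q + 1 < q ^ 2) (n : ℕ) : Strict q (lead n) := by
  intro j
  have hk := alt_lt_kap hq hg
  by_cases hj : j < n
  · have h0 : lead n j = -1 := if_pos hj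
    rw [V_tl, h0, sh_lead (by omega)]
    have h1 := V_lead hq (n - (j + 1))
    have h2 := V_lead hq 0
    rw [lead_zero, V_alt hq] at h2
    have h3 : q / (q ^ 2 - 1) / q ^ (n - (j + 1)) ≤ q / (q ^ 2 - 1) / q ^ 0 := by
      have : 0 < q ^ 2 - 1 := by nlinarith
      gcongr
      · exact hq.le
      · omega
    linarith
  · have : tl j (lead n) = alt := by
      rw [← tl_alt (j - n)]
      funext i
      simp only [tl, lead]
      rw [if_neg hj, if_neg (by omega)]
      congr 2; omega
    rw [this, V_alt hq]
    exact hk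

/-- The sequence `1, -1` followed by the negated alternating sequence. -/
def mid : ℕ → ℝ := fun i => if i = 0 then 1 else alt i * (if i = 1 then 1 else -1)

lemma mid_sign : IsSign mid := fun i => by
  unfold mid
  rcases alt_sign i with h | h <;> rw [h] <;> split_ifs <;> simp

lemma sh_mid : sh 2 mid = fun i => -1 * alt i := by
  funext i
  simp only [sh, mid, alt]
  rw [if_neg (by omega), if_neg (by omega), pow_add]
  norm_num

lemma V_mid1 {q : ℝ} (hq : 1 < q) : V q (sh 1 mid) = (-1 - 1 / (q + 1)) / q := by
  rw [V_step hq (mid_sign.sh 1), sh_sh, sh_mid, V_mul, V_alt hq]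
  have : sh 1 mid 0 = -1 := by norm_num [sh, mid, alt]
  rw [this]; ring

lemma V_mid {q : ℝ} (hq : 1 < q) : V q mid = (1 + (-1 - 1 / (q + 1)) / q) / q := by
  rw [V_step hq mid_sign, V_mid1 hq]
  simp [mid]

lemma mid_strict {q : ℝ} (hq : 181 / 100 < q) : Strict q mid := by
  have hq1 : 1 < q := by linarith
  have hk := alt_lt_kap hq1 (by nlinarith)
  rintro (_ | _ | j)
  · rw [V_tl, V_mid1 hq1]
    have h0 : mid 0 = 1 := by simp [mid]
    have h1 : (1 : ℝ) / (q + 1) < 100 / 281 := by rw [div_lt_div_iff₀] <;> linarith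
    have h2 : 1 / (q - 1) < 100 / 81 := by rw [div_lt_div_iff₀] <;> linarith
    have h3 : -1 * ((-1 - 1 / (q + 1)) / q) < 381 / 281 / (181 / 100) := by
      rw [show -1 * ((-1 - 1 / (q + 1)) / q) = (1 + 1 / (q + 1)) / q by ring]
      gcongr
      linarith
    rw [h0]
    unfold kap
    norm_num only at h3
    linarith
  · rw [V_tl, sh_mid, V_mul, V_alt hq1]
    have h0 : mid (0 + 1) = -1 := by norm_num [mid, alt]
    have : 0 < 1 / (q + 1) := by positivity
    rw [h0]
    linarith
  · have : tl (j + 1 + 1) mid = alt := by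
      rw [← tl_alt j]
      funext i
      simp only [tl, mid, alt]
      rw [if_neg (by omega), if_neg (by omega), if_neg (by omega), if_neg (by omega)]
      ring
    rw [this, V_alt hq1]
    exact hk

/-- Every `x ∈ (0,1)` has a unique expansion in some base: the sequences `lead n` and `mid`
suffice. -/
lemma univSet_nonempty {x : ℝ} (hx : x ∈ Set.Ioo (0 : ℝ) 1) : (UnivSet x).Nonempty := by
  set g := Real.goldenRatio with hg
  have hgs : g ^ 2 = g + 1 := Real.goldenRatio_sq
  have hg1 : 1 < g := Real.one_lt_goldenRatio
  have hg2 : g < 1.62 := by nlinarith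
  -- `lead n` expands the number `1 / g ^ n` in the golden base `g` and `(2 / 3) / 2 ^ n` in base `2`.
  have key : ∀ n : ℕ, 2 / 3 / 2 ^ n ≤ x → x < 1 / g ^ n → (UnivSet x).Nonempty := by
    intro n h1 h2
    obtain ⟨q, hq1, hq2, hV⟩ := exists_base (p := g) (r := 2) (x := x) hg1 (by linarith)
      (lead_sign n) (by
        rw [V_lead hg1, show g ^ 2 - 1 = g by linarith, div_self (by linarith)]; linarith)
      (by rw [V_lead one_lt_two]; norm_num at h1 ⊢; linarith)
    exact ⟨q, (mem_univSet_iff (by linarith) hq2).mpr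
      ⟨_, lead_sign n, hV, lead_strict (by linarith) (by nlinarith) n⟩⟩
  by_cases h1 : 2 / 3 ≤ x
  · exact key 0 (by simpa using h1) (by simpa using hx.2)
  by_cases h2 : 7 / 12 ≤ x
  · obtain ⟨q, hq1, hq2, hV⟩ := exists_base (p := 181 / 100) (r := 2) (x := x) (by norm_num)
      (by norm_num) mid_sign (by rw [V_mid (by norm_num)]; norm_num; linarith)
      (by rw [V_mid (by norm_num)]; norm_num; linarith)
    exact ⟨q, (mem_univSet_iff (by linarith) hq2).mpr
      ⟨_, mid_sign, hV, mid_strict hq1⟩⟩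
  push Not at h1 h2
  have hex : ∃ m : ℕ, 2 / 3 / 2 ^ (m + 1) ≤ x := by
    obtain ⟨m, hm⟩ := exists_pow_lt_of_lt_one hx.1 (show (1 / 2 : ℝ) < 1 by norm_num)
    refine ⟨m, le_trans ?_ hm.le⟩
    rw [one_div, inv_pow, pow_succ, div_le_iff₀ (by positivity)]
    have : (2 : ℝ) ^ m ≠ 0 := by positivity
    field_simp
    norm_num
  classical
  have hs := Nat.find_spec hex
  have hm := fun k => @Nat.find_min _ _ hex k
  set m := Nat.find hex
  rcases m with _ | m
  · refine key 1 hs ?_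
    rw [lt_div_iff₀ (by positivity)]
    nlinarith [hx.1]
  · refine key _ hs ?_
    have h3 := hm m (by omega)
    push Not at h3
    refine h3.trans_le ?_
    rw [div_div, div_le_div_iff₀ (by positivity) (by positivity)]
    have h4 : (g / 2) ^ m ≤ 1 := pow_le_one₀ (by positivity) (by linarith)
    have h5 : g ^ (m + 1 + 1) = (g / 2) ^ m * (2 ^ m * (g + 1)) := by
      clear_value g
      rw [pow_succ, pow_succ, div_pow, ← hgs]
      field_simp
    have h6 : (0 : ℝ) < 2 ^ m := by positivity
    rw [h5, pow_succ]
    have h7 : (g / 2) ^ m * (2 ^ m * (g + 1)) ≤ 1 * (2 ^ m * (g + 1)) := by gcongr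
    nlinarith

/-! ### The impossible case of a reflected tail -/

/-- If `c` equals its tail behind `j`, then iterating that tail on another sequence with the
same prefix leads to a tail which has the prefix but whose own tail behind `j` has not. -/
lemma exists_departure {c e : ℕ → ℝ} (hc : IsSign c) (he : IsSign e) {j : ℕ} (htl : tl j c = c)
    (hne : e ≠ c) (hag : ∀ i < j + 1, e i = c i) :
    ∃ f, (f = e ∨ ∃ k, f = tl k e) ∧ (∀ i < j + 1, f i = c i) ∧
      ¬ ∀ i < j + 1, tl j f i = c i := by
  by_contra! hcon
  refine hne (funext fun i => ?_)
  suffices h : ∀ i f, (f = e ∨ ∃ k, f = tl k e) → (∀ i < j + 1, f i = c i) → f i = c i from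
    h i e (Or.inl rfl) hag
  intro i
  induction i using Nat.strong_induction_on with
  | _ i ih =>
    intro f hf hfa
    by_cases hi : i < j + 1
    · exact hfa i hi
    · have h1 := ih (i - (j + 1)) (by omega) (tl j f) (by
        rcases hf with rfl | ⟨k, rfl⟩
        · exact Or.inr ⟨j, rfl⟩
        · exact Or.inr ⟨_, tl_tl he _ _⟩) (hcon f hf hfa)
      have h2 := congrFun htl (i - (j + 1))
      simp only [tl] at h1 h2
      rw [show j + 1 + (i - (j + 1)) = i by omega] at h1 h2
      rw [hfa j (by omega), ← h2] at h1
      rcases hc j with h | h <;> rw [h] at h1 <;> linarith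

/-- A limit `c` of admissible sequences cannot be its own reflected tail, unless the sequences
are eventually equal to `c`. -/
lemma odd_case {q : ℝ} (hq : 1 < q) (hq2 : q < 2) {Q : ℕ → ℝ} {E : ℕ → ℕ → ℝ} {c : ℕ → ℝ}
    (hQ1 : ∀ n, 1 < Q n) (hQ : Tendsto Q atTop (nhds q)) (hE : Tendsto E atTop (nhds c))
    (hs : ∀ n, IsSign (E n)) (hS : ∀ n, Strict (Q n) (E n)) (hV : ∀ n, V (Q n) (E n) < kap (Q n))
    (hne : ∃ᶠ n in atTop, E n ≠ c) (hw : Weak q c) (hVc : V q c = kap q) {j : ℕ}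
    (hj : c j = 1) (htl : tl j c = c) : False := by
  have hc := sign_of_tendsto hE hs
  have hfr := hne.and_eventually (eventually_agree hE hs hc (j + 1))
  obtain ⟨φ, hφ, hφ2⟩ := extraction_of_frequently_atTop hfr
  have key : ∀ n, ∃ f, IsSign f ∧ Strict (Q (φ n)) f ∧ V (Q (φ n)) f < kap (Q (φ n)) ∧
      (∀ i < j + 1, f i = c i) ∧ ¬ ∀ i < j + 1, tl j f i = c i := by
    intro n
    obtain ⟨f, hf, h1, h2⟩ := exists_departure hc (hs _) htl (hφ2 n).1 (hφ2 n).2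
    refine ⟨f, ?_, ?_, ?_, h1, h2⟩
    · rcases hf with rfl | ⟨k, rfl⟩
      exacts [hs _, (hs _).tl k]
    · rcases hf with rfl | ⟨k, rfl⟩
      exacts [hS _, (hS _).tl (hs _) k]
    · rcases hf with rfl | ⟨k, rfl⟩
      exacts [hV _, hS _ k]
  choose F hFs hFS hFV hFa hFn using key
  obtain ⟨f, hf, ψ, hψ, hlim⟩ := exists_subseq (fun n => tl j (F n)) fun n => (hFs n).tl j
  have hR : Tendsto (fun n => Q (φ (ψ n))) atTop (nhds q) :=
    hQ.comp (hφ.tendsto_atTop.comp hψ.tendsto_atTop)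
  have hfw : Weak q f := weak_of_tendsto hq hR hlim (fun n => (hFs _).tl j)
    fun n => (hFS (ψ n)).tl (hFs _) j
  have hVf := V_tendsto hq hR hlim fun n => (hFs _).tl j
  -- The tail of `F n` is squeezed: it is below `kap` by admissibility, and since the digit `1`
  -- at `j` reflects it, the bound on the value of `F n` bounds it from below.
  have hlow : ∀ n, Q (φ (ψ n)) ^ (j + 1) * (V (Q (φ (ψ n))) c - kap (Q (φ (ψ n))))
      + V (Q (φ (ψ n))) c ≤ V (Q (φ (ψ n))) (tl j (F (ψ n))) := by
    intro n
    set r := Q (φ (ψ n))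
    have hr : 1 < r := hQ1 _
    have h1 := V_agree hr (j + 1) (hFs (ψ n)) hc (hFa (ψ n))
    have h2 := V_tl r j (F (ψ n))
    have h3 := V_tl r j c
    rw [htl, hj] at h3
    rw [hFa (ψ n) j (by omega), hj] at h2
    rw [eq_div_iff (by positivity)] at h1
    have h4 : V r (F (ψ n)) < kap r := hFV (ψ n)
    have h5 : 0 < r ^ (j + 1) := by positivity
    nlinarith
  have hVc' := (V_tendsto_base hq hc).comp hR
  have hk' := (kap_tendsto hq).comp hR
  have hlim2 := ((hR.pow (j + 1)).mul (hVc'.sub hk')).add hVc'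
  have h1 : kap q ≤ V q f := by
    have := le_of_tendsto_of_tendsto' hlim2 hVf hlow
    rw [hVc] at this
    linarith
  have h2 : V q f ≤ kap q := le_of_tendsto_of_tendsto' hVf hk' fun n => (hFS (ψ n) j).le
  have hfc : f = c := weak_unique hq hq2 hf hc hfw hw (by linarith)
  rw [hfc] at hlim
  obtain ⟨n, hn⟩ := (eventually_agree hlim (fun n => (hFs _).tl j) hc (j + 1)).exists
  exact hFn _ hn

/-! ### A reflected continuation of a prefix -/

/-- A sequence that is positive on the infinite set `A` and tends to `0` attains strict record
minima on `A` arbitrarily far out. -/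
lemma exists_record {A : ℕ → Prop} {f : ℕ → ℝ} (hA : ∀ M, ∃ m, M ≤ m ∧ A m)
    (hpos : ∀ i, A i → 0 < f i) (hf : Tendsto f atTop (nhds 0)) (M : ℕ) :
    ∃ m, M ≤ m ∧ A m ∧ ∀ i < m, A i → f m < f i := by
  classical
  have hε : ∀ M : ℕ, ∃ ε > 0, ∀ i < M, A i → ε ≤ f i := by
    intro M
    induction M with
    | zero => exact ⟨1, one_pos, fun i hi => absurd hi (by omega)⟩
    | succ M ih =>
      obtain ⟨ε, h0, h1⟩ := ih
      by_cases hM : A M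
      · refine ⟨min ε (f M), lt_min h0 (hpos M hM), fun i hi hAi => ?_⟩
        rcases Nat.lt_succ_iff_lt_or_eq.mp hi with h | rfl
        · exact (min_le_left _ _).trans (h1 i h hAi)
        · exact min_le_right _ _
      · refine ⟨ε, h0, fun i hi hAi => ?_⟩
        rcases Nat.lt_succ_iff_lt_or_eq.mp hi with h | rfl
        · exact h1 i h hAi
        · exact absurd hAi hM
  obtain ⟨ε, h0, h1⟩ := hε M
  obtain ⟨K, hK⟩ := eventually_atTop.mp (hf.eventually (gt_mem_nhds h0))
  obtain ⟨m, hm, hAm⟩ := hA K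
  have hex : ∃ m, A m ∧ ∀ i < M, A i → f m < f i :=
    ⟨m, hAm, fun i hi hAi => (hK m hm).trans_le (h1 i hi hAi)⟩
  obtain ⟨h2, h3⟩ := Nat.find_spec hex
  refine ⟨Nat.find hex, ?_, h2, fun i hi hAi => ?_⟩
  · by_contra! h
    exact lt_irrefl _ (h3 _ h h2)
  · have := Nat.find_min hex hi
    push Not at this
    by_cases hiM : i < M
    · exact h3 i hiM hAi
    · obtain ⟨k, hk, hAk, hle⟩ := this hAi
      exact (h3 k hk hAk).trans_le hle

/-- Continuing the prefix of `c` of length `m + 1` by alternate reflections gives a strictly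
admissible sequence close to `c`, provided that the gap `(kap q + V (sh (i+1) c)) / q^(i+1)`,
for `c i = 1`, attains a record minimum at `i = m`. -/
lemma exists_reflected {q : ℝ} (hq : 1 < q) {c : ℕ → ℝ} (hc : IsSign c) (hw : Weak q c)
    (hVc : V q c = kap q) {m : ℕ} (hm : c m = 1) (hm0 : V q (tl m c) < kap q)
    (hrec : ∀ i < m, c i = 1 → (kap q + V q (sh (m + 1) c)) / q ^ (m + 1)
      < (kap q + V q (sh (i + 1) c)) / q ^ (i + 1)) :
    ∃ S, IsSign S ∧ kap q - V q S < (kap q + V q (sh (m + 1) c)) / q ^ (m + 1) ∧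
      ∀ᶠ p in nhds q, V p S < kap p ∧ Strict p S := by
  -- `S` consists of blocks of length `m + 1`: the prefix of `c` and its negation, alternately.
  let S : ℕ → ℝ := fun i => (-1) ^ (i / (m + 1)) * c (i % (m + 1))
  have hS : IsSign S := by
    intro i
    simp only [S]
    rcases neg_one_pow_eq_or ℝ (i / (m + 1)) with h | h <;>
      rcases hc (i % (m + 1)) with h' | h' <;> rw [h, h'] <;> norm_num
  have hSc : ∀ i < m + 1, S i = c i := by
    intro i hi
    simp only [S]
    rw [Nat.div_eq_of_lt hi, Nat.mod_eq_of_lt hi]; simp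
  have hSn : ∀ i, S (m + 1 + i) = -1 * S i := by
    intro i
    simp only [S]
    rw [Nat.add_div_left _ (by omega), Nat.add_mod_left, pow_succ]; ring
  have hSsh : V q (sh (m + 1) S) = -1 * V q S := by
    rw [← V_mul]; congr 1; funext i; exact hSn i
  rw [V_tl, hm] at hm0
  have hqp : 0 < q ^ (m + 1) := by positivity
  have hq1 : 1 < q ^ (m + 1) := one_lt_pow₀ hq (by omega)
  have h0 := V_agree hq (m + 1) hS hc hSc
  rw [hSsh, hVc, eq_div_iff hqp.ne'] at h0
  have hlt : V q S < kap q := by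
    by_contra! h
    nlinarith
  have hgap : 0 < V q S + V q (sh (m + 1) c) := by nlinarith
  have hfin : ∀ i < m + 1, V q (tl i S) < kap q := by
    intro i hi
    rw [V_tl, hSc i hi]
    have hag := V_agree hq (m - i) (hS.sh (i + 1)) (hc.sh (i + 1))
      fun k hk => hSc _ (by omega)
    rw [sh_sh, sh_sh, show i + 1 + (m - i) = m + 1 by omega, hSsh,
      eq_div_iff (by positivity)] at hag
    have hqi : 0 < q ^ (m - i) := by positivity
    have hwi := hw i
    rw [V_tl] at hwi
    rcases hc i with h | h
    · rw [h] at hwi ⊢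
      have hr : (kap q + V q (sh (m + 1) c)) ≤ (kap q + V q (sh (i + 1) c)) * q ^ (m - i) := by
        rcases Nat.lt_succ_iff_lt_or_eq.mp hi with h' | rfl
        · have := hrec i h' h
          have h3 : 0 < q ^ (i + 1) := by positivity
          have h4 : q ^ (m + 1) = q ^ (m - i) * q ^ (i + 1) := by
            rw [← pow_add]; congr 1; omega
          rw [div_lt_div_iff₀ hqp h3, h4, ← mul_assoc] at this
          exact (lt_of_mul_lt_mul_right this h3.le).le
        · simp
      by_contra! h4
      nlinarith
    · rw [h] at hwi ⊢
      by_contra! h4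
      nlinarith
  -- Only the first `m + 1` tails matter, so strictness at `q` extends to nearby bases.
  have hper : ∀ j, ∃ i < m + 1, tl j S = tl i S := by
    intro j
    induction j using Nat.strong_induction_on with
    | _ j ih =>
      by_cases hj : j < m + 1
      · exact ⟨j, hj, rfl⟩
      · obtain ⟨i, hi, h⟩ := ih (j - (m + 1)) (by omega)
        refine ⟨i, hi, h ▸ ?_⟩
        funext k
        simp only [tl]
        have h1 := hSn (j - (m + 1))
        have h2 := hSn (j - (m + 1) + 1 + k)
        rw [show m + 1 + (j - (m + 1)) = j by omega] at h1
        rw [show m + 1 + (j - (m + 1) + 1 + k) = j + 1 + k by omega] at h2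
        rw [h1, h2]; ring
  refine ⟨S, hS, ?_, ?_⟩
  · rw [lt_div_iff₀ hqp]
    nlinarith
  · have hev : ∀ e : ℕ → ℝ, IsSign e → V q e < kap q → ∀ᶠ p in nhds q, V p e < kap p :=
      fun e he h => (V_tendsto_base hq he).eventually_lt (kap_tendsto hq) h
    have hev2 : ∀ᶠ p in nhds q, ∀ i ∈ Set.Iio (m + 1), V p (tl i S) < kap p :=
      (Set.finite_Iio (m + 1)).eventually_all.mpr fun i hi => hev _ (hS.tl i) (hfin i hi)
    filter_upwards [hev S hS hlt, hev2] with p hp1 hp2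
    refine ⟨hp1, fun j => ?_⟩
    obtain ⟨i, hi, h⟩ := hper j
    rw [h]
    exact hp2 i hi

/-! ### Periodic expansions of `1` and the closure of `𝒰(1)` -/

/-- The first `k * N` digits of `c`, followed by `S`. -/
def glue (c S : ℕ → ℝ) (N k : ℕ) : ℕ → ℝ := fun i => if i < k * N then c i else S (i - k * N)

lemma glue_sign {c S : ℕ → ℝ} (hc : IsSign c) (hS : IsSign S) (N k : ℕ) :
    IsSign (glue c S N k) := fun i => by
  unfold glue
  split_ifs
  exacts [hc i, hS _]

lemma glue_tendsto (c S : ℕ → ℝ) {N : ℕ} (hN : 0 < N) :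
    Tendsto (glue c S N) atTop (nhds c) := by
  refine tendsto_pi_nhds.mpr fun i => ?_
  refine tendsto_const_nhds.congr' ?_
  filter_upwards [eventually_gt_atTop i] with k hk
  have : i < k * N := by nlinarith
  simp [glue, this]

lemma glue_zero (c S : ℕ → ℝ) (N : ℕ) : glue c S N 0 = S := by funext i; simp [glue]

lemma glue_succ {c S : ℕ → ℝ} {N : ℕ} (hper : ∀ i, c (N + i) = c i) (k i : ℕ) :
    glue c S N (k + 1) (N + i) = glue c S N k i := by
  unfold glue
  have h : (k + 1) * N = N + k * N := by ring
  rw [h]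
  by_cases hi : i < k * N
  · rw [if_pos hi, if_pos (by omega), hper]
  · rw [if_neg hi, if_neg (by omega)]; congr 1; omega

lemma V_glue {p : ℝ} (hp : 1 < p) {c S : ℕ → ℝ} (hc : IsSign c) (hS : IsSign S) {N : ℕ}
    (hper : ∀ i, c (N + i) = c i) (k : ℕ) :
    V p (glue c S N k) - V p c = (V p S - V p c) / p ^ (k * N) := by
  induction k with
  | zero => simp [glue_zero]
  | succ k ih =>
    have h := V_agree hp N (glue_sign hc hS N (k + 1)) hc fun i hi => by
      have : i < (k + 1) * N := by nlinarith
      simp [glue, this]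
    have h1 : sh N (glue c S N (k + 1)) = glue c S N k := funext (glue_succ hper k)
    have h2 : sh N c = c := funext hper
    rw [h, h1, h2, ih, div_div, ← pow_add]
    congr 2; ring

/-- Let `c` have period `j + 1`. In a base `p` in which `glue c S (j + 1) k` has value `kap p`,
and under strict inequalities that hold just below `q` in `even_case`, this sequence is strictly
admissible: its tails at multiples of the period are `glue c S (j + 1) i` with `i < k`, whose
values increase with `i` from `V p S`, and the other tails are close to tails of `c`. -/
lemma glue_strict {p : ℝ} (hp : 1 < p) {c S : ℕ → ℝ} (hc : IsSign c) (hS : IsSign S) {j : ℕ}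
    (hj : c j = -1) (hper : ∀ i, c (j + 1 + i) = c i) {k : ℕ}
    (hroot : V p (glue c S (j + 1) k) = kap p) (hy : kap p < V p c)
    (hVS : V p S < kap p) (hstS : Strict p S)
    (h2 : ∀ i < j, c i = -1 → V p (sh (i + 1) c) < kap p)
    (h3 : ∀ i < j, c i = 1 → -V p (sh (i + 1) c) + (V p c - V p S) < kap p) :
    Strict p (glue c S (j + 1) k) := by
  have hmono : ∀ i, V p (glue c S (j + 1) i) < V p (glue c S (j + 1) (i + 1)) := by
    intro i
    have h1 := V_glue hp hc hS hper i
    have h2 := V_glue hp hc hS hper (i + 1)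
    have h3 : (V p c - V p S) / p ^ ((i + 1) * (j + 1)) < (V p c - V p S) / p ^ (i * (j + 1)) := by
      have : 0 < V p c - V p S := by linarith
      have h4 : i * (j + 1) < (i + 1) * (j + 1) := by nlinarith
      gcongr
    have h4 : ∀ n : ℕ, (V p S - V p c) / p ^ n = -((V p c - V p S) / p ^ n) := fun n => by ring
    rw [h4] at h1 h2
    linarith
  have hsm : StrictMono fun i => V p (glue c S (j + 1) i) := strictMono_nat_of_lt_succ hmono
  have hg0 := glue_zero c S (j + 1)
  suffices h : ∀ i ≤ k, Strict p (glue c S (j + 1) i) from h k le_rfl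
  intro i
  induction i with
  | zero => intro _; rw [hg0]; exact hstS
  | succ n ih =>
    intro hn t
    have hub : V p (glue c S (j + 1) n) < kap p := hroot ▸ hsm (by omega : n < k)
    have hlb : V p S ≤ V p (glue c S (j + 1) n) := by
      have := hsm.monotone (Nat.zero_le n)
      simpa only [hg0] using this
    by_cases ht : t < j + 1
    · have hcg : ∀ i < j + 1, glue c S (j + 1) (n + 1) i = c i := fun i hi => by
        have : i < (n + 1) * (j + 1) := by nlinarith
        simp [glue, this]
      have hag := V_agree hp (j - t) ((glue_sign hc hS (j + 1) (n + 1)).sh (t + 1))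
        (hc.sh (t + 1)) fun i hi => hcg _ (by omega)
      rw [sh_sh, sh_sh, show t + 1 + (j - t) = j + 1 by omega,
        show sh (j + 1) (glue c S (j + 1) (n + 1)) = glue c S (j + 1) n from
          funext (glue_succ hper n), show sh (j + 1) c = c from funext hper] at hag
      have hpow : 1 ≤ p ^ (j - t) := one_le_pow₀ hp.le
      have hb1 : (V p c - V p (glue c S (j + 1) n)) / p ^ (j - t)
          ≤ V p c - V p (glue c S (j + 1) n) := div_le_self (by linarith) hpow
      have hb2 : 0 ≤ (V p c - V p (glue c S (j + 1) n)) / p ^ (j - t) :=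
        div_nonneg (by linarith) (by linarith)
      have hneg : (V p (glue c S (j + 1) n) - V p c) / p ^ (j - t)
          = -((V p c - V p (glue c S (j + 1) n)) / p ^ (j - t)) := by ring
      rw [hneg] at hag
      rw [V_tl, hcg t ht]
      rcases Nat.lt_succ_iff_lt_or_eq.mp ht with h | rfl
      · rcases hc t with h1 | h1
        · have := h3 t h h1
          rw [h1]; linarith
        · have := h2 t h h1
          rw [h1]; linarith
      · rw [hj, show sh (t + 1) (glue c S (t + 1) (n + 1)) = glue c S (t + 1) n from
          funext (glue_succ hper n)]
        linarith
    · have h1 : tl t (glue c S (j + 1) (n + 1)) = tl (t - (j + 1)) (glue c S (j + 1) n) := by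
        funext i
        simp only [tl]
        have e1 := glue_succ (S := S) hper n (t - (j + 1))
        have e2 := glue_succ (S := S) hper n (t - (j + 1) + 1 + i)
        rw [show j + 1 + (t - (j + 1)) = t by omega] at e1
        rw [show j + 1 + (t - (j + 1) + 1 + i) = t + 1 + i by omega] at e2
        rw [e1, e2]
      rw [h1]
      exact ih (by omega) _

/-- If `1` has in base `q` a periodic, weakly admissible expansion `c` which meets the critical
value `kap q` only behind digits `-1`, then `q` is a limit of bases in which `1` has a unique
expansion. -/
lemma even_case {q : ℝ} (hq : 1 < q) (hq2 : q < 2) {c : ℕ → ℝ} (hc : IsSign c) (hw : Weak q c)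
    (hVc : V q c = kap q) (hodd : ∀ j, V q (tl j c) = kap q → c j ≠ 1)
    (hex : ∃ j, V q (tl j c) = kap q) : q ∈ closure (UnivSet 1) := by
  classical
  -- Minimality of `j` makes the inequalities before `j` strict.
  obtain ⟨j, hjV, hjmin⟩ : ∃ j, V q (tl j c) = kap q ∧ ∀ i < j, V q (tl i c) ≠ kap q :=
    ⟨Nat.find hex, Nat.find_spec hex, fun i hi => Nat.find_min hex hi⟩
  have hj : c j = -1 := (hc j).resolve_left (hodd j hjV)
  have htl : tl j c = c := weak_unique hq hq2 (hc.tl j) hc (hw.tl hc j) hw (hjV.trans hVc.symm)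
  have hper : ∀ i, c (j + 1 + i) = c i := fun i => by
    have := congrFun htl i
    simp only [tl] at this
    rw [hj] at this
    linarith
  have hstr1 : ∀ i, c i = 1 → V q (tl i c) < kap q := fun i hi =>
    lt_of_le_of_ne (hw i) fun h => hodd i h hi
  have hinf : ∀ M, ∃ m, M ≤ m ∧ c m = 1 := by
    obtain ⟨i, hi⟩ : ∃ i, c i = 1 := by
      by_contra! h
      have h1 := V_const hq (e := c) fun i => (hc i).resolve_left (h i)
      rw [hVc, kap] at h1
      linarith
    intro M
    refine ⟨M * (j + 1) + i, by nlinarith, ?_⟩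
    induction M with
    | zero => simpa using hi
    | succ M ih => rw [← ih, ← hper (M * (j + 1) + i)]; congr 1; ring
  have hf0 : Tendsto (fun i : ℕ => (kap q + V q (sh (i + 1) c)) / q ^ (i + 1)) atTop (nhds 0) := by
    refine squeeze_zero_norm (a := fun n => (|kap q| + 1 / (q - 1)) * (q⁻¹) ^ (n + 1))
      (fun n => ?_) ?_
    · rw [norm_div, Real.norm_eq_abs, Real.norm_of_nonneg (by positivity), div_eq_mul_inv,
        inv_pow]
      refine mul_le_mul_of_nonneg_right ((abs_add_le _ _).trans ?_) (by positivity)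
      have := V_bound hq (hc.sh (n + 1))
      linarith
    · simpa using ((tendsto_add_atTop_iff_nat 1).mpr (tendsto_pow_atTop_nhds_zero_of_lt_one
        (r := q⁻¹) (by positivity) (inv_lt_one_of_one_lt₀ hq))).const_mul (|kap q| + 1 / (q - 1))
  have hpos : ∀ i, c i = 1 → 0 < (kap q + V q (sh (i + 1) c)) := fun i hi => by
    have := hstr1 i hi
    rw [V_tl, hi] at this
    linarith
  obtain ⟨m, hmj, hm, hrec⟩ := exists_record (A := fun i => c i = 1) hinf
    (fun i hi => div_pos (hpos i hi) (by positivity)) hf0 j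
  obtain ⟨S, hS, hgap, hSev⟩ := exists_reflected hq hc hw hVc hm (hstr1 m hm) hrec
  have hsq := hSev.self_of_nhds.1
  have hV := fun e (he : IsSign e) => V_tendsto_base hq he
  have ev2 : ∀ᶠ p in nhds q, ∀ i ∈ Set.Iio j, c i = -1 → V p (sh (i + 1) c) < kap p := by
    refine (Set.finite_Iio j).eventually_all.mpr fun i hi => ?_
    by_cases hci : c i = -1
    · have h := lt_of_le_of_ne (hw i) (hjmin i hi)
      rw [V_tl, hci] at h
      filter_upwards [(hV _ (hc.sh (i + 1))).eventually_lt (kap_tendsto hq) (by linarith)] with p hp _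
      exact hp
    · exact Eventually.of_forall fun p h => absurd h hci
  have ev3 : ∀ᶠ p in nhds q, ∀ i ∈ Set.Iio j, c i = 1 →
      -V p (sh (i + 1) c) + (V p c - V p S) < kap p := by
    refine (Set.finite_Iio j).eventually_all.mpr fun i hi => ?_
    by_cases hci : c i = 1
    · have h1 := hrec i (lt_of_lt_of_le hi hmj) hci
      have h2 : (kap q + V q (sh (i + 1) c)) / q ^ (i + 1) ≤ kap q + V q (sh (i + 1) c) :=
        div_le_self (hpos i hci).le (one_le_pow₀ hq.le)
      filter_upwards [((hV _ (hc.sh (i + 1))).neg.add ((hV c hc).sub (hV S hS))).eventually_lt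
        (kap_tendsto hq) (by linarith)] with p hp _
      exact hp
    · exact Eventually.of_forall fun p h => absurd h hci
  obtain ⟨δ, hδ, hball⟩ := Metric.eventually_nhds_iff.mp (hSev.and (ev2.and ev3))
  refine Metric.mem_closure_iff.mpr fun ε hε => ?_
  obtain ⟨p, hp1, hpq⟩ := exists_between
    (show max 1 (max (q - δ) (q - ε)) < q from max_lt hq (max_lt (by linarith) (by linarith)))
  obtain ⟨hp, hp1⟩ := max_lt_iff.mp hp1
  obtain ⟨hpδ, hpε⟩ := max_lt_iff.mp hp1
  -- With enough periods, `glue` represents more than `1` in base `p` and less than `1` in base `q`.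
  have hk : ∃ k, 2 * 1 < V p (glue c S (j + 1) k) + 1 / (p - 1) := by
    have h1 := V_anti hp hpq hc hm
    rw [hVc, kap] at h1
    have h2 := V_tendsto hp (tendsto_const_nhds (x := p)) (glue_tendsto c S (Nat.succ_pos j))
      fun k => glue_sign hc hS _ k
    obtain ⟨k, hk⟩ := (h2.eventually (lt_mem_nhds (show 2 - 1 / (p - 1) < V p c by linarith))).exists
    exact ⟨k, by linarith⟩
  obtain ⟨k, hk⟩ := hk
  have hkq : V q (glue c S (j + 1) k) < kap q := by
    have h := V_glue hq hc hS hper k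
    have : (V q S - V q c) / q ^ (k * (j + 1)) < 0 :=
      div_neg_of_neg_of_pos (by linarith) (by positivity)
    linarith
  obtain ⟨r, hpr, hrq, hr⟩ := exists_base hp hpq.le (glue_sign hc hS (j + 1) k) hk
    (by unfold kap at hkq; linarith)
  have hr' : V r (glue c S (j + 1) k) = kap r := by rw [hr, kap]; ring
  have hrq' : r < q := lt_of_le_of_ne hrq (by rintro rfl; linarith)
  have hr1 : 1 < r := by linarith
  obtain ⟨⟨b1, b2⟩, b3, b4⟩ := hball (y := r) (by
    rw [Real.dist_eq, abs_sub_comm, abs_of_pos] <;> linarith)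
  refine ⟨r, (mem_univSet_iff hr1 (by linarith)).mpr ⟨_, glue_sign hc hS (j + 1) k, hr, ?_⟩, ?_⟩
  · refine glue_strict hr1 hc hS hj hper hr' ?_ b1 b2 b3 b4
    have h1 := V_anti hr1 hrq' hc hm
    rw [hVc, kap] at h1
    unfold kap
    linarith
  · rw [Real.dist_eq, abs_of_pos] <;> linarith

/-! ### Attainment of the infimum -/

/-- The infimum of `𝒰(x)` is attained when it lies outside the closure of `𝒰(1)`. -/
lemma attained {x : ℝ} (hx : x ∈ Set.Ioo (0 : ℝ) 1)
    (h : qs x ∉ closure (UnivSet 1)) : IsLeast (UnivSet x) (qs x) := by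
  have hne := univSet_nonempty hx
  have hbdd : BddBelow (UnivSet x) := ⟨3 / 2, fun q hq => (base_lower hx hq).le⟩
  have hglb : IsGLB (UnivSet x) (qs x) := isGLB_csInf hne hbdd
  refine ⟨?_, hglb.1⟩
  by_contra hnot
  set q := qs x with hqdef
  have hq : 1 < q := by
    have : 3 / 2 ≤ q := hglb.2 fun r hr => (base_lower hx hr).le
    linarith
  have hq2 : q < 2 := by
    obtain ⟨r, hr⟩ := hne
    refine lt_of_le_of_ne ((hglb.1 hr).trans hr.1.2) fun h2 => h ?_
    rw [h2]
    exact subset_closure two_mem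
  obtain ⟨R, -, -, hR, hRm⟩ := hglb.exists_seq_antitone_tendsto hne
  choose D hDs hDV hDS using fun n =>
    (mem_univSet_iff (hRm n).1.1 (hRm n).1.2).mp (hRm n)
  obtain ⟨d, hd, φ, hφ, hlim⟩ := exists_subseq D hDs
  have hQ : Tendsto (R ∘ φ) atTop (nhds q) := hR.comp hφ.tendsto_atTop
  have hQq : ∀ n, q < R (φ n) := fun n =>
    lt_of_le_of_ne (hglb.1 (hRm _)) fun h => hnot (h ▸ hRm _)
  have hdw : Weak q d := weak_of_tendsto hq hQ hlim (fun n => hDs _) fun n => hDS _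
  have hdV : V q d = 2 * x - 1 / (q - 1) := by
    refine tendsto_nhds_unique (V_tendsto hq hQ hlim fun n => hDs _) ?_
    refine Tendsto.congr (f₁ := fun n => 2 * x - 1 / (R (φ n) - 1)) (fun n => (hDV (φ n)).symm) ?_
    exact tendsto_const_nhds.sub (tendsto_const_nhds.div (hQ.sub tendsto_const_nhds)
      (by linarith))
  -- One sequence cannot represent the same `x > 0` in two bases.
  have hDd : ∀ n, D (φ n) ≠ d := by
    intro n hn
    obtain ⟨i, hi⟩ := not_const hq hq2.le hx hdV (Or.inr rfl)
    have h1 := V_anti hq (hQq n) hd ((hd i).resolve_right hi)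
    have h2 := hDV (φ n)
    rw [hn] at h2
    linarith
  obtain ⟨k, hk⟩ : ∃ k, V q (tl k d) = kap q := by
    by_contra! hc
    exact hnot ((mem_univSet_iff hq hq2.le).mpr
      ⟨d, hd, hdV, fun j => lt_of_le_of_ne (hdw j) (hc j)⟩)
  set c := tl k d with hcdef
  have hc : IsSign c := hd.tl k
  have hcw : Weak q c := hdw.tl hd k
  have huniq : ∀ j, V q (tl j c) = kap q → tl j c = c := fun j hj =>
    weak_unique hq hq2 (hc.tl j) hc (hcw.tl hc j) hcw (hj.trans hk.symm)
  have hE : Tendsto (fun n => tl k (D (φ n))) atTop (nhds c) := tl_tendsto hlim k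
  have hEc : ∀ᶠ n in atTop, tl k (D (φ n)) ≠ c := by
    filter_upwards [eventually_agree hlim (fun n => hDs _) hd (k + 1)] with n hn heq
    refine hDd n (funext fun i => ?_)
    by_cases hi : i < k + 1
    · exact hn i hi
    · have h1 := congrFun heq (i - (k + 1))
      have h2 : D (φ n) k = d k := hn k (by omega)
      simp only [hcdef, tl] at h1
      rw [h2, show k + 1 + (i - (k + 1)) = i by omega] at h1
      rcases hd k with h3 | h3 <;> rw [h3] at h1 <;> linarith
  -- If `c` were strict, then `q` would even belong to `𝒰(1)`.
  refine h (even_case hq hq2 hc hcw hk (fun j hj hj1 => ?_) ?_)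
  · exact odd_case hq hq2 (Q := R ∘ φ) (fun n => (hRm _).1.1) hQ hE (fun n => (hDs _).tl k)
      (fun n => (hDS _).tl (hDs _) k) (fun n => hDS _ k) hEc.frequently hcw hk hj1 (huniq j hj)
  · by_contra! hno
    refine h (subset_closure ((mem_univSet_iff hq hq2.le).mpr
      ⟨c, hc, ?_, fun j => lt_of_le_of_ne (hcw j) (hno j)⟩))
    rw [hk, kap]; ring

end Univoque

/-- for `x ∈ (0,1)`, if `q_s(x)` is not in the closure of `𝒰(1)`,
then the infimum defining `q_s(x)` is attained, i.e. `q_s(x) = min 𝒰(x)`. -/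
theorem qs_attained_of_not_mem_closure (x : ℝ) (hx : x ∈ Set.Ioo (0 : ℝ) 1)
    (h : qs x ∉ closure (UnivSet 1)) : IsLeast (UnivSet x) (qs x) :=
  Univoque.attained hx h
end
end

section
/- Let q ∈ (1,2], x > 0, and suppose (d_i)_{i≥1} is the unique q-expansion of x (i.e. q ∈ 𝒰(x) and x = Σ_{i=1}^∞ d_i q^{-i}). If k ≥ 1 is an integer with q_G^{-k} < x < q_G^{-k+1}, then Σ_{i=1}^∞ i·d_i·q^{-(i+1)} ≥ 2^{-(k+1)}. If instead x > 1, then Σ_{i=1}^∞ i·d_i·q^{-(i+1)} ≥ 1/4. -/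
/-!
Since `i ≥ 1`, comparing `∑ i d_i q^{-(i+1)}` term by term with
`q⁻¹ ∑ d_i q^{-i} = x / q` bounds it below by `x / q ≥ x / 2`
(`half_le_derivative_sum`). If `x > 1` this exceeds `1 / 4`, and if `x > q_G^{-k}` it exceeds
`q_G^{-k} / 2 ≥ 2^{-(k+1)}` because `q_G ≤ 2`. Both series converge, being dominated by
`∑ i q^{-(i+1)}` with `q > 1`, so the comparison of their sums is legitimate.
-/

open Filter Set

noncomputable section

theorem qG_pos : 0 < qG := by
  unfold qG; positivity

theorem qG_le_two : qG ≤ 2 := by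
  have h : Real.sqrt 5 ≤ 3 := by
    rw [Real.sqrt_le_left (by norm_num)]; norm_num
  unfold qG; linarith

theorem half_le_derivative_sum {q x : ℝ} (hq1 : 1 < q) (hq2 : q ≤ 2) (hx : 0 < x)
    {d : ℕ → ℕ} (hd : IsExpansion q x d) :
    x / 2 ≤ ∑' i : ℕ, ((i + 1 : ℕ) : ℝ) * (d i : ℝ) / q ^ (i + 2) := by
  obtain ⟨hd1, hdx⟩ := hd
  have hq0 : 0 < q := by linarith
  have hd1' : ∀ i, (d i : ℝ) ≤ 1 := fun i => by exact_mod_cast hd1 i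
  have hr : ‖q⁻¹‖ < 1 := by
    rw [Real.norm_of_nonneg (by positivity)]
    exact inv_lt_one_of_one_lt₀ hq1
  have hbound : Summable fun i : ℕ => ((i + 1 : ℕ) : ℝ) / q ^ (i + 2) := by
    have h := summable_pow_mul_geometric_of_norm_lt_one 1 hr
    refine (((summable_nat_add_iff 1).2 h).mul_right q⁻¹).congr fun i => ?_
    rw [pow_one, inv_pow]
    field_simp
    ring
  have hsum : Summable fun i : ℕ => ((i + 1 : ℕ) : ℝ) * (d i : ℝ) / q ^ (i + 2) := by
    refine hbound.of_nonneg_of_le (fun i => by positivity) fun i => ?_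
    gcongr
    exact mul_le_of_le_one_right (by positivity) (hd1' i)
  have hle : ∀ i : ℕ, (d i : ℝ) / q ^ (i + 1) * q⁻¹
      ≤ ((i + 1 : ℕ) : ℝ) * (d i : ℝ) / q ^ (i + 2) := by
    intro i
    have h : (d i : ℝ) / q ^ (i + 1) * q⁻¹ = (d i : ℝ) / q ^ (i + 2) := by
      field_simp
      ring
    rw [h]
    gcongr
    exact le_mul_of_one_le_left (by positivity) (by push_cast; linarith [i.cast_nonneg (α := ℝ)])
  have hsum' : Summable fun i : ℕ => (d i : ℝ) / q ^ (i + 1) * q⁻¹ :=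
    hsum.of_nonneg_of_le (fun i => by positivity) hle
  calc x / 2 ≤ x / q := by gcongr
    _ = ∑' i : ℕ, (d i : ℝ) / q ^ (i + 1) * q⁻¹ := by
      rw [tsum_mul_right, ← hdx, div_eq_mul_inv]
    _ ≤ _ := hsum'.tsum_le_tsum hle hsum

/-- derivative bound for unique expansions.  If `(d_i)` is the
unique `q`-expansion of `x`, then `∑_{i≥1} i d_i q^{-(i+1)} ≥ 2^{-(k+1)}` when
`q_G^{-k} < x < q_G^{-k+1}`, and `≥ 1/4` when `x > 1`. -/
theorem derivative_bound (q x : ℝ) (hx : 0 < x) (hq : q ∈ UnivSet x)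
    (d : ℕ → ℕ) (hd : IsExpansion q x d) :
    (∀ k : ℕ, 1 ≤ k → qG ^ (-(k : ℤ)) < x → x < qG ^ (-(k : ℤ) + 1) →
      (1 : ℝ) / 2 ^ (k + 1) ≤ ∑' i : ℕ, ((i + 1 : ℕ) : ℝ) * (d i : ℝ) / q ^ (i + 2)) ∧
    (1 < x →
      (1 : ℝ) / 4 ≤ ∑' i : ℕ, ((i + 1 : ℕ) : ℝ) * (d i : ℝ) / q ^ (i + 2)) := by
  have h := half_le_derivative_sum hq.1.1 hq.1.2 hx hd
  refine ⟨fun k _ hk _ => le_trans ?_ h, fun hx1 => by linarith⟩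
  have hpow : (1 : ℝ) / 2 ^ k ≤ qG ^ (-(k : ℤ)) := by
    have hG := qG_pos
    rw [zpow_neg, zpow_natCast, ← one_div]
    gcongr
    exact qG_le_two
  calc (1 : ℝ) / 2 ^ (k + 1) = 1 / 2 ^ k / 2 := by rw [pow_succ, div_div]
    _ ≤ x / 2 := by linarith
end
end

section
/- The set S has the following properties: (i) 2^k ∈ S for every k ≥ 1; (ii) 2^{2k} − 2 ∈ S and 2^{2k} − 1 ∈ S for every k ≥ 1; (iii) for every k ≥ 1, the number of elements of S that are ≤ 2^k equals the k-th Lucas number ((1+√5)/2)^k + ((1−√5)/2)^k; consequently S has density zero in ℕ, i.e. (#{m ∈ S : m ≤ n})/n → 0 as n → ∞. -/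
/-!
Adding `3 * 2 ^ k` maps the part of `S` up to `2 ^ k` bijectively onto the part of `S` in
`(2 ^ (k + 1), 2 ^ (k + 2)]` for `k ≥ 1` (`memS_add` and `exists_of_memS`). Iterating this shift on
`2` and `4`, respectively on `2` and `3`, gives the powers of two and the numbers `4 ^ k - 2` and
`4 ^ k - 1`. Writing `a k` for the number of elements of `S` up to `2 ^ k`, the bijection says
`a (k + 2) = a (k + 1) + a k`, which together with `a 1 = 1` and `a 2 = 3` identifies `a k` as the
Lucas number `φ ^ k + ψ ^ k`, where `φ, ψ = (1 ± √5) / 2`. Since `φ / 2` and `ψ / 2` have absolute value less than one,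
`a k / 2 ^ k` tends to zero, and comparing `n` with the neighbouring powers of two yields density
zero.
-/

open Filter Set

noncomputable section

lemma memS_two_le {n : ℕ} (h : memS n) : 2 ≤ n := by
  cases h with
  | two => omega
  | three => omega
  | four => omega
  | step k n hk h1 h2 h3 h =>
    have := Nat.pow_le_pow_right (n := 2) (by omega) hk
    omega

lemma memS_add {k m : ℕ} (hk : 1 ≤ k) (hm : memS m) (hle : m ≤ 2 ^ k) :
    memS (m + 3 * 2 ^ k) := by
  have h2 := memS_two_le hm
  have e1 : 2 ^ (k + 1) = 2 * 2 ^ k := by ring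
  have e2 : 2 ^ (k + 1 + 1) = 4 * 2 ^ k := by ring
  refine memS.step (k + 1) _ (by omega) (by omega) (by omega) ?_ ?_
  · rw [Nat.add_sub_cancel]; omega
  · rwa [Nat.add_sub_cancel, Nat.add_sub_cancel]

/-- Inversion of the recursion: a constructor `memS.step` producing an element of the dyadic block
`(2 ^ (k + 1), 2 ^ (k + 2)]` can only have been applied at level `k + 1`. -/
lemma exists_of_memS {k n : ℕ} (hk : 1 ≤ k) (hn : memS n) (h1 : 2 ^ (k + 1) < n)
    (h2 : n ≤ 2 ^ (k + 2)) : ∃ m, memS m ∧ m ≤ 2 ^ k ∧ m + 3 * 2 ^ k = n := by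
  have h4 : 2 ^ 2 ≤ 2 ^ (k + 1) := Nat.pow_le_pow_right (by omega) (by omega)
  cases hn with
  | two => omega
  | three => omega
  | four => omega
  | step j n hj g1 g2 g3 h =>
    have a : j < k + 2 := (Nat.pow_lt_pow_iff_right (by omega : 1 < 2)).1 (g1.trans_le h2)
    have b : k + 1 < j + 1 := (Nat.pow_lt_pow_iff_right (by omega : 1 < 2)).1 (h1.trans_le g2)
    obtain rfl : j = k + 1 := by omega
    rw [Nat.add_sub_cancel] at g3 h
    have e2 : 2 ^ (k + 2) = 4 * 2 ^ k := by ring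
    exact ⟨_, h, by omega, by omega⟩

lemma finite_memS_le (n : ℕ) : {m : ℕ | memS m ∧ m ≤ n}.Finite :=
  (Set.finite_Iic n).subset fun _ h => h.2

lemma ncard_add_two {k : ℕ} (hk : 1 ≤ k) :
    {n : ℕ | memS n ∧ n ≤ 2 ^ (k + 2)}.ncard
      = {n : ℕ | memS n ∧ n ≤ 2 ^ (k + 1)}.ncard + {n : ℕ | memS n ∧ n ≤ 2 ^ k}.ncard := by
  have e1 : 2 ^ (k + 1) = 2 * 2 ^ k := by ring
  have e2 : 2 ^ (k + 2) = 4 * 2 ^ k := by ring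
  have hpos : 0 < 2 ^ k := by positivity
  have hU : {n : ℕ | memS n ∧ n ≤ 2 ^ (k + 2)} = {n : ℕ | memS n ∧ n ≤ 2 ^ (k + 1)} ∪
      (fun m => m + 3 * 2 ^ k) '' {n : ℕ | memS n ∧ n ≤ 2 ^ k} := by
    ext n
    simp only [Set.mem_ofPred_eq, Set.mem_union, Set.mem_image]
    constructor
    · rintro ⟨hn, hle⟩
      by_cases h : n ≤ 2 ^ (k + 1)
      · exact Or.inl ⟨hn, h⟩
      · obtain ⟨m, hm, hm', e⟩ := exists_of_memS hk hn (by omega) hle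
        exact Or.inr ⟨m, ⟨hm, hm'⟩, e⟩
    · rintro (⟨hn, hle⟩ | ⟨m, ⟨hm, hle⟩, rfl⟩)
      · exact ⟨hn, by omega⟩
      · exact ⟨memS_add hk hm hle, by omega⟩
  rw [hU, Set.ncard_union_eq _ (finite_memS_le _) ((finite_memS_le _).image _),
    Set.ncard_image_of_injective _ (add_left_injective _)]
  rw [Set.disjoint_left]
  rintro _ ⟨_, hle⟩ ⟨m, _, rfl⟩
  dsimp only at hle
  omega

lemma ncard_one : {n : ℕ | memS n ∧ n ≤ 2 ^ 1}.ncard = 1 := by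
  have : {n : ℕ | memS n ∧ n ≤ 2 ^ 1} = {2} := by
    ext n
    simp only [Set.mem_ofPred_eq, Set.mem_singleton_iff]
    constructor
    · rintro ⟨hn, hle⟩
      have := memS_two_le hn
      omega
    · rintro rfl
      exact ⟨memS.two, by norm_num⟩
  rw [this, Set.ncard_singleton]

lemma ncard_two : {n : ℕ | memS n ∧ n ≤ 2 ^ 2}.ncard = 3 := by
  have : {n : ℕ | memS n ∧ n ≤ 2 ^ 2} = ((Finset.Icc 2 4 : Finset ℕ) : Set ℕ) := by
    ext n
    simp only [Set.mem_ofPred_eq, Finset.coe_Icc, Set.mem_Icc]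
    constructor
    · rintro ⟨hn, hle⟩
      exact ⟨memS_two_le hn, by omega⟩
    · rintro ⟨h1, h2⟩
      refine ⟨?_, by omega⟩
      interval_cases n
      exacts [memS.two, memS.three, memS.four]
  rw [this, Set.ncard_coe_finset]
  rfl

lemma ncard_eq_lucas (k : ℕ) :
    ({n : ℕ | memS n ∧ n ≤ 2 ^ (k + 1)}.ncard : ℝ)
      = ((1 + Real.sqrt 5) / 2) ^ (k + 1) + ((1 - Real.sqrt 5) / 2) ^ (k + 1) := by
  have h5 : Real.sqrt 5 ^ 2 = 5 := Real.sq_sqrt (by norm_num)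
  induction k using Nat.twoStepInduction with
  | zero =>
    rw [zero_add, ncard_one]
    push_cast
    ring
  | one =>
    rw [one_add_one_eq_two, ncard_two]
    push_cast
    linear_combination (-1 / 2) * h5
  | more k ih0 ih1 =>
    have h := ncard_add_two (k := k + 1) (by omega)
    rw [show k + 2 + 1 = k + 1 + 2 by ring, h]
    push_cast
    rw [ih0, ih1]
    -- both bases are roots of `x ^ 2 = x + 1`
    linear_combination (-1 / 4) * (((1 + Real.sqrt 5) / 2) ^ (k + 1)
      + ((1 - Real.sqrt 5) / 2) ^ (k + 1)) * h5

/-- The Lucas numbers are `o(2 ^ k)`. -/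
lemma tendsto_lucas_div : Filter.Tendsto (fun k : ℕ =>
    2 * (((1 + Real.sqrt 5) / 2 / 2) ^ (k + 1) + ((1 - Real.sqrt 5) / 2 / 2) ^ (k + 1)))
    Filter.atTop (nhds 0) := by
  have h0 : 0 ≤ Real.sqrt 5 := Real.sqrt_nonneg 5
  have h3 : Real.sqrt 5 < 3 := by
    rw [Real.sqrt_lt' (by norm_num)]
    norm_num
  have ha := tendsto_pow_atTop_nhds_zero_of_abs_lt_one (r := (1 + Real.sqrt 5) / 2 / 2)
    (by rw [abs_lt]; constructor <;> linarith)
  have hb := tendsto_pow_atTop_nhds_zero_of_abs_lt_one (r := (1 - Real.sqrt 5) / 2 / 2)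
    (by rw [abs_lt]; constructor <;> linarith)
  simpa using ((Filter.tendsto_add_atTop_iff_nat 1).2 (ha.add hb)).const_mul 2

/-- For `2 ^ k ≤ n < 2 ^ (k + 1)`, the proportion of `S` up to `n` is at most twice the proportion
up to `2 ^ (k + 1)`, written here through the Lucas number `φ ^ (k + 1) + ψ ^ (k + 1)`. -/
lemma density_le {n : ℕ} (hn : 0 < n) :
    ({m : ℕ | memS m ∧ m ≤ n}.ncard : ℝ) / n ≤
      2 * (((1 + Real.sqrt 5) / 2 / 2) ^ (Nat.log 2 n + 1)
        + ((1 - Real.sqrt 5) / 2 / 2) ^ (Nat.log 2 n + 1)) := by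
  have h1 : 2 ^ Nat.log 2 n ≤ n := Nat.pow_log_le_self 2 hn.ne'
  have h2 : n < 2 ^ (Nat.log 2 n + 1) := Nat.lt_pow_succ_log_self (by omega) n
  generalize Nat.log 2 n = k at *
  have hc : {m : ℕ | memS m ∧ m ≤ n}.ncard ≤ {m : ℕ | memS m ∧ m ≤ 2 ^ (k + 1)}.ncard :=
    Set.ncard_le_ncard (fun m hm => ⟨hm.1, hm.2.trans h2.le⟩) (finite_memS_le _)
  have h1' : (2 : ℝ) ^ k ≤ n := by exact_mod_cast h1
  calc ({m : ℕ | memS m ∧ m ≤ n}.ncard : ℝ) / n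
      ≤ ({m : ℕ | memS m ∧ m ≤ 2 ^ (k + 1)}.ncard : ℝ) / 2 ^ k := by gcongr
    _ = _ := by
      rw [ncard_eq_lucas, div_pow (_ / 2) (2 : ℝ), div_pow (_ / 2) (2 : ℝ), pow_succ (2 : ℝ) k]
      field_simp

lemma memS_two_pow (k : ℕ) : memS (2 ^ (k + 1)) := by
  induction k using Nat.twoStepInduction with
  | zero => exact memS.two
  | one => exact memS.four
  | more k ih0 _ =>
    rw [show 2 ^ (k + 2 + 1) = 2 ^ (k + 1) + 3 * 2 ^ (k + 1) by ring]
    exact memS_add (by omega) ih0 le_rfl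

lemma memS_four_pow_sub (k : ℕ) :
    memS (2 ^ (2 * (k + 1)) - 2) ∧ memS (2 ^ (2 * (k + 1)) - 1) := by
  induction k with
  | zero => exact ⟨memS.two, memS.three⟩
  | succ k ih =>
    have e : 2 ^ (2 * (k + 1 + 1)) = 4 * 2 ^ (2 * (k + 1)) := by ring
    have h4 : 2 ^ 2 ≤ 2 ^ (2 * (k + 1)) := Nat.pow_le_pow_right (by omega) (by omega)
    have ha := memS_add (k := 2 * (k + 1)) (by omega) ih.1 (by omega)
    have hb := memS_add (k := 2 * (k + 1)) (by omega) ih.2 (by omega)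
    constructor
    · convert ha using 1; omega
    · convert hb using 1; omega

/-- properties of the set `S`: it contains all powers `2^k`
(`k ≥ 1`), the numbers `2^{2k} - 2` and `2^{2k} - 1`, the count of its elements
`≤ 2^k` is the `k`-th Lucas number, and `S` has density zero in `ℕ`. -/
theorem memS_properties :
    (∀ k : ℕ, 1 ≤ k → memS (2 ^ k)) ∧
    (∀ k : ℕ, 1 ≤ k → memS (2 ^ (2 * k) - 2) ∧ memS (2 ^ (2 * k) - 1)) ∧
    (∀ k : ℕ, 1 ≤ k →
      (({n : ℕ | memS n ∧ n ≤ 2 ^ k}.ncard : ℝ)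
        = ((1 + Real.sqrt 5) / 2) ^ k + ((1 - Real.sqrt 5) / 2) ^ k)) ∧
    Filter.Tendsto (fun n : ℕ => ({m : ℕ | memS m ∧ m ≤ n}.ncard : ℝ) / n)
      Filter.atTop (nhds 0) := by
  refine ⟨fun k hk => ?_, fun k hk => ?_, fun k hk => ?_, ?_⟩
  · obtain ⟨k, rfl⟩ := Nat.exists_eq_add_of_le' hk
    exact memS_two_pow k
  · obtain ⟨k, rfl⟩ := Nat.exists_eq_add_of_le' hk
    exact memS_four_pow_sub k
  · obtain ⟨k, rfl⟩ := Nat.exists_eq_add_of_le' hk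
    exact ncard_eq_lucas k
  · have hlog : Filter.Tendsto (Nat.log 2) Filter.atTop Filter.atTop :=
      Filter.tendsto_atTop_atTop_of_monotone Nat.log_monotone
        fun b => ⟨2 ^ b, (Nat.log_pow (by omega) b).ge⟩
    refine squeeze_zero' (Filter.Eventually.of_forall fun n => by positivity) ?_
      (tendsto_lucas_div.comp hlog)
    filter_upwards [Filter.eventually_gt_atTop 0] with n hn
    exact density_le hn
end
end

section
/- For every integer m ≥ 1, q̂_{m+1} − q̂_m ≥ 0.265 · q̂_{m+1}^{−2^m}; in particular q̂_{m+1} − q̂_m > q̂_{m+1}^{−(2^m+3)}. -/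
/-!
Put `x = 1/q`, `N = 2^m` and `F_n(x) = ∑_{1 ≤ i ≤ n} τ_i x^i`, so that `F_N = 1` at `u = 1/q̂_m` and
`F_{2N} = 1` at `y = 1/q̂_{m+1}`. As `τ_{N+i} = 1 - τ_i` for `0 ≤ i < N` and `τ_N = τ_{2N} = 1`, the
polynomial `F_{2N}` is explicit in terms of `F_N`, and `F_{2N}(y) = 1` becomes
`1 - F_N(y) = y^N (2y-1)/(1-y)` (`tmPoly_defect`).

This is positive, so `y < u`. Bounding each `u^i - y^i` by its tangent line gives
`1 - F_N(y) ≤ (q̂_{m+1} - q̂_m) · y · E_N(u)` with `E_n(x) = ∑_{1 ≤ i ≤ n} i τ_i x^i`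
(`tmPoly_sub_le`). If `Y ≤ y` and `u ≤ U`, it therefore suffices that
`0.265 · U · E_N(U) ≤ (2Y-1)/(1-Y)` (`gap_of_bounds`). Even with the
exact roots for `Y` and `U`, the right side exceeds the left by less than one percent as `m → ∞`, so
for `m ≥ 3` the bounds `Y` and `U` have to be sharp; one pair serves all `m ≥ 3` because the tails
beyond `i = 16` are dominated by (arithmetico-)geometric series. The cases `m = 1, 2` get their own constants. The second inequality follows from the first since
`y ≤ U ≤ 0.625` makes `y^3 < 0.265`.
-/

open Filter Set

noncomputable section

/-- `F_n(x) = ∑_{1 ≤ i ≤ n} τ_i x^i`. -/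
def tmPoly (n : ℕ) (x : ℝ) : ℝ := ∑ i ∈ Finset.range n, (tm (i + 1) : ℝ) * x ^ (i + 1)

/-- `E_n(x) = ∑_{1 ≤ i ≤ n} i τ_i x^i`, that is `x F_n'(x)`. -/
def tmDer (n : ℕ) (x : ℝ) : ℝ :=
  ∑ i ∈ Finset.range n, ((i : ℝ) + 1) * (tm (i + 1) : ℝ) * x ^ (i + 1)

lemma tm_le_one (i : ℕ) : tm i ≤ 1 := by unfold tm; omega

lemma tm_two_mul (i : ℕ) : tm (2 * i) = tm i := by
  rcases Nat.eq_zero_or_pos i with rfl | h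
  · rfl
  · unfold tm
    rw [Nat.digits_def' (by norm_num) (by omega)]
    simp

lemma tm_two_mul_add_one (i : ℕ) : tm (2 * i + 1) = 1 - tm i := by
  unfold tm
  rw [Nat.digits_def' (by norm_num) (by omega)]
  have h1 : (2 * i + 1) % 2 = 1 := by omega
  have h2 : (2 * i + 1) / 2 = i := by omega
  rw [h1, h2, List.sum_cons]
  omega

/-- Setting the leading binary digit of a number below `2^m` flips its Thue–Morse value. -/
lemma tm_two_pow_add (m : ℕ) : ∀ i < 2 ^ m, tm (2 ^ m + i) = 1 - tm i := by
  induction m with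
  | zero =>
    intro i hi
    obtain rfl : i = 0 := by simpa using hi
    simp [tm]
  | succ m ih =>
    intro i hi
    rw [pow_succ] at hi
    obtain ⟨j, rfl | rfl⟩ : ∃ j, i = 2 * j ∨ i = 2 * j + 1 := ⟨i / 2, by omega⟩
    · rw [show 2 ^ (m + 1) + 2 * j = 2 * (2 ^ m + j) by ring, tm_two_mul, tm_two_mul,
        ih j (by omega)]
    · rw [show 2 ^ (m + 1) + (2 * j + 1) = 2 * (2 ^ m + j) + 1 by ring, tm_two_mul_add_one,
        tm_two_mul_add_one, ih j (by omega)]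

lemma tm_two_pow (m : ℕ) : tm (2 ^ m) = 1 := by
  simpa [tm] using tm_two_pow_add m 0 (by positivity)

lemma tmPoly_eq (n : ℕ) (x : ℝ) :
    tmPoly n x = ∑ i ∈ Finset.range n, (tm i : ℝ) * x ^ i + tm n * x ^ n := by
  have h0 : tm 0 = 0 := by simp [tm]
  have h := Finset.sum_range_succ' (fun i => (tm i : ℝ) * x ^ i) n
  rw [Finset.sum_range_succ] at h
  simp only [h0, Nat.cast_zero, zero_mul, add_zero] at h
  exact h.symm

/-- The doubling relation for `F`, read at a root of `F_{2N} = 1`. -/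
lemma tmPoly_defect (m : ℕ) (y : ℝ) (h0 : 0 < y) (h1 : y < 1)
    (h : tmPoly (2 ^ (m + 1)) y = 1) :
    1 - tmPoly (2 ^ m) y = y ^ (2 ^ m) * ((2 * y - 1) / (1 - y)) := by
  have hN : y ^ (2 ^ m) < 1 := pow_lt_one₀ h0.le h1 (by positivity)
  rw [tmPoly_eq, tm_two_pow, pow_succ 2 m, mul_two, Finset.sum_range_add] at h
  have hs : ∑ i ∈ Finset.range (2 ^ m), (tm (2 ^ m + i) : ℝ) * y ^ (2 ^ m + i)
      = y ^ (2 ^ m) * ((1 - y ^ (2 ^ m)) / (1 - y)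
        - ∑ i ∈ Finset.range (2 ^ m), (tm i : ℝ) * y ^ i) := by
    have hg : (1 - y ^ (2 ^ m)) / (1 - y) = ∑ i ∈ Finset.range (2 ^ m), y ^ i := by
      rw [geom_sum_eq h1.ne, ← neg_div_neg_eq]
      congr 1 <;> ring
    rw [hg, ← Finset.sum_sub_distrib, Finset.mul_sum]
    refine Finset.sum_congr rfl fun i hi => ?_
    rw [tm_two_pow_add m i (Finset.mem_range.1 hi), Nat.cast_sub (tm_le_one i), pow_add]
    push_cast
    ring
  rw [hs] at h
  rw [tmPoly_eq, tm_two_pow]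
  set S := ∑ i ∈ Finset.range (2 ^ m), (tm i : ℝ) * y ^ i
  rw [pow_add] at h
  set p := y ^ (2 ^ m)
  have hy : 1 - y ≠ 0 := by linarith
  have hp : 1 - p ≠ 0 := by linarith
  field_simp at h ⊢
  push_cast at h ⊢
  apply mul_left_cancel₀ hp
  linear_combination -h

lemma tmPoly_mono (n : ℕ) {x z : ℝ} (hx : 0 ≤ x) (hxz : x ≤ z) : tmPoly n x ≤ tmPoly n z := by
  unfold tmPoly
  gcongr

lemma tmDer_mono (n : ℕ) {x z : ℝ} (hx : 0 ≤ x) (hxz : x ≤ z) : tmDer n x ≤ tmDer n z := by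
  unfold tmDer
  gcongr

lemma tmPoly_mono_left {n k : ℕ} (h : n ≤ k) {x : ℝ} (hx : 0 ≤ x) :
    tmPoly n x ≤ tmPoly k x :=
  Finset.sum_le_sum_of_subset_of_nonneg (Finset.range_mono h) fun _ _ _ => by positivity

lemma tmDer_mono_left {n k : ℕ} (h : n ≤ k) {x : ℝ} (hx : 0 ≤ x) :
    tmDer n x ≤ tmDer k x :=
  Finset.sum_le_sum_of_subset_of_nonneg (Finset.range_mono h) fun _ _ _ => by positivity

lemma tmPoly_strictMono {n : ℕ} (hn : 1 ≤ n) {x z : ℝ} (hx : 0 ≤ x) (hxz : x < z) :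
    tmPoly n x < tmPoly n z := by
  unfold tmPoly
  refine Finset.sum_lt_sum (fun i _ => by gcongr) ⟨0, Finset.mem_range.2 hn, ?_⟩
  simpa [tm] using hxz

/-- The tangent line bound for `F_n`, scaled by `u` to avoid dividing in `E_n(u) / u`. -/
lemma tmPoly_sub_le (n : ℕ) {y u : ℝ} (hy : 0 ≤ y) (hyu : y ≤ u) :
    u * (tmPoly n u - tmPoly n y) ≤ (u - y) * tmDer n u := by
  have hu : 0 ≤ u := hy.trans hyu
  unfold tmPoly tmDer
  rw [← Finset.sum_sub_distrib, Finset.mul_sum, Finset.mul_sum]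
  refine Finset.sum_le_sum fun i _ => ?_
  have key : u ^ (i + 1) - y ^ (i + 1) ≤ (u - y) * (((i : ℝ) + 1) * u ^ i) := by
    rw [← (Commute.all u y).mul_geom_sum₂ (i + 1)]
    refine mul_le_mul_of_nonneg_left ?_ (by linarith)
    calc ∑ j ∈ Finset.range (i + 1), u ^ j * y ^ (i + 1 - 1 - j)
        ≤ ∑ j ∈ Finset.range (i + 1), u ^ i := by
          refine Finset.sum_le_sum fun j hj => ?_
          have hj' : j ≤ i := Nat.lt_succ_iff.1 (Finset.mem_range.1 hj)
          calc u ^ j * y ^ (i + 1 - 1 - j) ≤ u ^ j * u ^ (i - j) := by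
                rw [Nat.add_sub_cancel]; gcongr
            _ = u ^ i := by rw [← pow_add, Nat.add_sub_cancel' hj']
      _ = ((i : ℝ) + 1) * u ^ i := by simp
  calc u * ((tm (i + 1) : ℝ) * u ^ (i + 1) - tm (i + 1) * y ^ (i + 1))
      = (u * tm (i + 1)) * (u ^ (i + 1) - y ^ (i + 1)) := by ring
    _ ≤ (u * tm (i + 1)) * ((u - y) * (((i : ℝ) + 1) * u ^ i)) := by gcongr
    _ = _ := by ring

/-- Reduction of the gap estimate to numerical bounds `Y ≤ 1/q̂_{m+1}` and `1/q̂_m ≤ U`, each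
certified by a value of `F`. -/
lemma gap_of_bounds (m : ℕ) (a b Y U : ℝ) (ha : a ∈ Set.Ioo (1 : ℝ) 2)
    (hb : b ∈ Set.Ioo (1 : ℝ) 2) (hFa : tmPoly (2 ^ m) a⁻¹ = 1)
    (hFb : tmPoly (2 ^ (m + 1)) b⁻¹ = 1)
    (hY : 0 < Y) (hY1 : Y < 1) (hU : 0 < U) (hU1 : U ≤ 0.625)
    (hFY : tmPoly (2 ^ (m + 1)) Y ≤ 1) (hFU : 1 ≤ tmPoly (2 ^ m) U)
    (hK : 0.265 * (U * tmDer (2 ^ m) U) ≤ (2 * Y - 1) / (1 - Y)) :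
    0.265 * b⁻¹ ^ (2 ^ m) ≤ b - a ∧ b⁻¹ ^ (2 ^ m + 3) < b - a := by
  obtain ⟨ha1, ha2⟩ := ha
  obtain ⟨hb1, hb2⟩ := hb
  have ha0 : a ≠ 0 := by linarith
  have hb0 : b ≠ 0 := by linarith
  have hu0 : 0 < a⁻¹ := by positivity
  have hy0 : 0 < b⁻¹ := by positivity
  have hdiff : a⁻¹ - b⁻¹ = (b - a) * (a⁻¹ * b⁻¹) := by field_simp
  set u := a⁻¹
  set y := b⁻¹ with hy
  have hy1 : y < 1 := inv_lt_one_of_one_lt₀ hb1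
  have hyhalf : 1 / 2 < y := by
    rw [hy, one_div]; exact inv_strictAnti₀ (by linarith) hb2
  have huU : u ≤ U := by
    by_contra! hlt
    have := tmPoly_strictMono (n := 2 ^ m) Nat.one_le_two_pow hU.le hlt
    linarith
  have hYy : Y ≤ y := by
    by_contra! hlt
    have := tmPoly_strictMono (n := 2 ^ (m + 1)) Nat.one_le_two_pow hy0.le hlt
    linarith
  have hdef := tmPoly_defect m y hy0 hy1 hFb
  have hp : 0 < y ^ (2 ^ m) := by positivity
  have hpos : 0 < y ^ (2 ^ m) * ((2 * y - 1) / (1 - y)) :=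
    mul_pos hp (div_pos (by linarith) (by linarith))
  have hyu : y ≤ u := by
    by_contra! hlt
    have := tmPoly_mono (2 ^ m) hu0.le hlt.le
    linarith
  have htan := tmPoly_sub_le (2 ^ m) hy0.le hyu
  rw [hFa, hdef, hdiff] at htan
  have hba : 0 ≤ b - a := by
    by_contra! hlt
    have : (b - a) * (u * y) < 0 := mul_neg_of_neg_of_pos hlt (by positivity)
    linarith
  have hE0 : 0 ≤ tmDer (2 ^ m) u := Finset.sum_nonneg fun _ _ => by positivity
  have hslope : y ^ (2 ^ m) * ((2 * y - 1) / (1 - y)) ≤ (b - a) * (U * tmDer (2 ^ m) U) := by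
    have h1 : y ^ (2 ^ m) * ((2 * y - 1) / (1 - y)) ≤ (b - a) * (y * tmDer (2 ^ m) u) := by
      refine le_of_mul_le_mul_left (htan.trans_eq ?_) hu0
      ring
    refine h1.trans (mul_le_mul_of_nonneg_left ?_ hba)
    exact mul_le_mul (hyu.trans huU) (tmDer_mono _ hu0.le huU) hE0 hU.le
  have hratio : (2 * Y - 1) / (1 - Y) ≤ (2 * y - 1) / (1 - y) := by
    rw [div_le_div_iff₀ (by linarith) (by linarith)]
    nlinarith
  have hK0 : 0 < U * tmDer (2 ^ m) U := by
    by_contra! hle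
    have := mul_nonpos_of_nonneg_of_nonpos hba hle
    linarith
  have hmain : 0.265 * y ^ (2 ^ m) ≤ b - a := by
    refine le_of_mul_le_mul_right (le_trans ?_ hslope) hK0
    calc 0.265 * y ^ (2 ^ m) * (U * tmDer (2 ^ m) U)
        = y ^ (2 ^ m) * (0.265 * (U * tmDer (2 ^ m) U)) := by ring
      _ ≤ _ := mul_le_mul_of_nonneg_left (hK.trans hratio) hp.le
  refine ⟨hmain, lt_of_lt_of_le ?_ hmain⟩
  have hcube : y ^ 3 < 0.265 := by
    have : y ^ 3 ≤ 0.625 ^ 3 := pow_le_pow_left₀ hy0.le (by linarith) 3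
    norm_num at this ⊢
    linarith
  rw [pow_add, mul_comm]
  exact mul_lt_mul_of_pos_right hcube hp

/-- The digits beyond `i = 16` are bounded by `1`, so the tail from `17 + k` on is at most
`Y^(16+k) · Y / (1 - Y)`; the constant `1.27` is just above `Y / (1 - Y)` for `Y = 0.55947`. -/
lemma tmPoly_Y_le (n : ℕ) : tmPoly n 0.55947 ≤ 1 := by
  have step : ∀ k, tmPoly (16 + k) 0.55947 + 1.27 * 0.55947 ^ (16 + k) ≤ 1 := by
    intro k
    induction k with
    | zero => norm_num [tmPoly, Finset.sum_range_succ, tm]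
    | succ k ih =>
      have h1 : (tm (16 + k + 1) : ℝ) ≤ 1 := by exact_mod_cast tm_le_one _
      have hp : (0 : ℝ) < 0.55947 ^ (16 + k) := by positivity
      have hs : tmPoly (16 + (k + 1)) 0.55947 = tmPoly (16 + k) 0.55947
          + tm (16 + k + 1) * 0.55947 ^ (16 + k + 1) := Finset.sum_range_succ _ _
      rw [hs, ← add_assoc, pow_succ]
      nlinarith
  have h := step n
  have hp : (0 : ℝ) < 0.55947 ^ (16 + n) := by positivity
  have hm := tmPoly_mono_left (Nat.le_add_left n 16) (x := 0.55947) (by norm_num)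
  linarith

/-- The term `(1.28 k + 23.32) U^(16+k)` dominates the tail `∑_{i > 16+k} i U^i`. -/
lemma tmDer_U_le (n : ℕ) : 0.56038 * tmDer n 0.56038 ≤ 1.0185 := by
  have step : ∀ k : ℕ, tmDer (16 + k) 0.56038 + (1.28 * k + 23.32) * 0.56038 ^ (16 + k)
      ≤ 1.0185 / 0.56038 := by
    intro k
    induction k with
    | zero => norm_num [tmDer, Finset.sum_range_succ, tm]
    | succ k ih =>
      have h1 : (tm (16 + k + 1) : ℝ) ≤ 1 := by exact_mod_cast tm_le_one _
      have hp : (0 : ℝ) < 0.56038 ^ (16 + k) := by positivity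
      have hk : (0 : ℝ) ≤ k := by positivity
      have hs : tmDer (16 + (k + 1)) 0.56038 = tmDer (16 + k) 0.56038
          + (((16 + k : ℕ) : ℝ) + 1) * tm (16 + k + 1) * 0.56038 ^ (16 + k + 1) :=
        Finset.sum_range_succ _ _
      rw [hs, ← add_assoc, pow_succ]
      push_cast
      have h2 : ((16 + k : ℝ) + 1) * tm (16 + k + 1) ≤ (16 + k : ℝ) + 1 :=
        mul_le_of_le_one_right (by positivity) h1
      have h3 := mul_le_mul_of_nonneg_right h2 hp.le
      have h4 := mul_nonneg hk hp.le
      linarith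
  have h := step n
  have hp : (0 : ℝ) ≤ (1.28 * n + 23.32) * 0.56038 ^ (16 + n) := by positivity
  have hm := tmDer_mono_left (Nat.le_add_left n 16) (x := 0.56038) (by norm_num)
  rw [le_div_iff₀ (by norm_num)] at h
  linarith

/-- `q̂_{m+1} - q̂_m ≥ 0.265 · q̂_{m+1}^{-2^m} > q̂_{m+1}^{-(2^m+3)}`,
where `q̂_m` is the unique `q ∈ (1,2)` with `∑_{i=1}^{2^m} τ_i q^{-i} = 1`. -/
theorem qhat_gap (m : ℕ) (hm : 1 ≤ m) (qm qm1 : ℝ)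
    (hqm : qm ∈ Set.Ioo (1 : ℝ) 2) (hqm1 : qm1 ∈ Set.Ioo (1 : ℝ) 2)
    (heqm : ∑ i ∈ Finset.range (2 ^ m), (tm (i + 1) : ℝ) / qm ^ (i + 1) = 1)
    (heqm1 : ∑ i ∈ Finset.range (2 ^ (m + 1)), (tm (i + 1) : ℝ) / qm1 ^ (i + 1) = 1) :
    0.265 * qm1 ^ (-(2 ^ m : ℤ)) ≤ qm1 - qm ∧
      qm1 ^ (-((2 ^ m : ℤ) + 3)) < qm1 - qm := by
  have hconv : ∀ (n : ℕ) (q : ℝ),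
      ∑ i ∈ Finset.range n, (tm (i + 1) : ℝ) / q ^ (i + 1) = tmPoly n q⁻¹ := fun n q =>
    Finset.sum_congr rfl fun i _ => by rw [inv_pow, div_eq_mul_inv]
  rw [hconv] at heqm heqm1
  have e1 : qm1 ^ (-(2 ^ m : ℤ)) = qm1⁻¹ ^ (2 ^ m) := by
    rw [zpow_neg, inv_pow]
    exact_mod_cast rfl
  have e2 : qm1 ^ (-((2 ^ m : ℤ) + 3)) = qm1⁻¹ ^ (2 ^ m + 3) := by
    rw [zpow_neg, inv_pow]
    exact_mod_cast rfl
  rw [e1, e2]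
  obtain rfl | rfl | h3 : m = 1 ∨ m = 2 ∨ 3 ≤ m := by omega
  · apply gap_of_bounds 1 qm qm1 0.5695 0.625 hqm hqm1 heqm heqm1 <;>
      norm_num [tmPoly, tmDer, Finset.sum_range_succ, tm]
  · apply gap_of_bounds 2 qm qm1 0.56 0.57 hqm hqm1 heqm heqm1 <;>
      norm_num [tmPoly, tmDer, Finset.sum_range_succ, tm]
  -- `0.55947` is just below `lim 1/q̂_m ≈ 0.559525` and `0.56038` just above `1/q̂_3 ≈ 0.560350`.
  · refine gap_of_bounds m qm qm1 0.55947 0.56038 hqm hqm1 heqm heqm1 (by norm_num)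
      (by norm_num) (by norm_num) (by norm_num) (tmPoly_Y_le _) ?_ ?_
    · have h8 : 2 ^ 3 ≤ 2 ^ m := Nat.pow_le_pow_right (by norm_num) h3
      refine le_trans ?_ (tmPoly_mono_left h8 (by norm_num))
      norm_num [tmPoly, Finset.sum_range_succ, tm]
    · have h := tmDer_U_le (2 ^ m)
      calc 0.265 * (0.56038 * tmDer (2 ^ m) 0.56038) ≤ 0.265 * 1.0185 := by gcongr
        _ ≤ _ := by norm_num
end
end
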